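/- arXiv:2108.11210 — 7 statements merged into one kernel-verified Lean document; each statement's English description precedes it below -/
import Mathlib

section
/- Let q ≥ 0, β ≥ 0 and η < 0. Then the series Σ_{n=1}^∞ (-1)^{n-1} e^{nη} ∫_0^∞ e^{-nx} x^q √(1+βx/2) dx converges, and F_q(η,β) = Σ_{n=1}^∞ (-1)^{n-1} e^{nη} ∫_0^∞ e^{-nx} x^q √(1+βx/2) dx. -/
open Real MeasureTheory Set

/-- The relativistic Fermi-Dirac integral. -/
noncomputable def Frel (q η β : ℝ) : ℝ :=
  ∫ x in Ioi (0 : ℝ), x ^ q * Real.sqrt (1 + β * x / 2) / (Real.exp (x - η) + 1)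

lemma g_integrable (q β : ℝ) (hq : 0 ≤ q) (hβ : 0 ≤ β) (n : ℕ) :
    IntegrableOn (fun x : ℝ =>
      Real.exp (-((n : ℝ) + 1) * x) * x ^ q * Real.sqrt (1 + β * x / 2)) (Ioi 0) := by
  have h1 := Real.GammaIntegral_convergent (s := q + 1) (by linarith)
  have h2 := Real.GammaIntegral_convergent (s := q + 2) (by linarith)
  have h3 := h1.add (h2.const_mul (β / 2))
  refine Integrable.mono' h3 ?_ ?_
  · apply Measurable.aestronglyMeasurable
    fun_prop
  · refine (ae_restrict_iff' measurableSet_Ioi).2 (Filter.Eventually.of_forall fun x hx => ?_)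
    have hx : 0 < x := hx
    have hs : Real.sqrt (1 + β * x / 2) ≤ 1 + β * x / 2 := by
      have : 0 ≤ β * x / 2 := by positivity
      rw [Real.sqrt_le_left (by linarith)]
      nlinarith
    have he : Real.exp (-((n : ℝ) + 1) * x) ≤ Real.exp (-x) := by
      apply Real.exp_le_exp.2
      have : 0 ≤ (n : ℝ) * x := by positivity
      linarith
    have e1 : q + 1 - 1 = q := by ring
    have e2 : q + 2 - 1 = q + 1 := by ring
    rw [Real.norm_of_nonneg (by positivity)]
    simp only [Pi.add_apply, e1, e2]
    rw [Real.rpow_add_one hx.ne']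
    calc _ ≤ Real.exp (-x) * x ^ q * (1 + β * x / 2) := by gcongr
      _ = _ := by ring

theorem stmt0 (q β η : ℝ) (hq : 0 ≤ q) (hβ : 0 ≤ β) (hη : η < 0) :
    Summable (fun n : ℕ =>
      (-1 : ℝ) ^ n * Real.exp (((n : ℝ) + 1) * η) *
        ∫ x in Ioi (0 : ℝ),
          Real.exp (-((n : ℝ) + 1) * x) * x ^ q * Real.sqrt (1 + β * x / 2)) ∧
    Frel q η β = ∑' n : ℕ,
      (-1 : ℝ) ^ n * Real.exp (((n : ℝ) + 1) * η) *
        ∫ x in Ioi (0 : ℝ),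
          Real.exp (-((n : ℝ) + 1) * x) * x ^ q * Real.sqrt (1 + β * x / 2) := by
  set g : ℕ → ℝ → ℝ := fun n x =>
    Real.exp (-((n : ℝ) + 1) * x) * x ^ q * Real.sqrt (1 + β * x / 2) with hg
  have hgi : ∀ n, IntegrableOn (g n) (Ioi 0) := g_integrable q β hq hβ
  have hg0 : ∀ n, ∀ x ∈ Ioi (0 : ℝ), 0 ≤ g n x := by
    intro n x hx
    have hx : 0 < x := hx
    simp only [hg]
    positivity
  have hle : ∀ n, ∫ x in Ioi (0 : ℝ), g n x ≤ ∫ x in Ioi (0 : ℝ), g 0 x := by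
    intro n
    refine setIntegral_mono_on (hgi n) (hgi 0) measurableSet_Ioi fun x hx => ?_
    have hx : 0 < x := hx
    simp only [hg]
    gcongr
    simp
  have hexp : Summable (fun n : ℕ => Real.exp (((n : ℝ) + 1) * η)) := by
    have h := (summable_geometric_of_lt_one (Real.exp_pos η).le
      (Real.exp_lt_one_iff.2 hη)).mul_left (Real.exp η)
    refine h.congr fun n => ?_
    rw [← Real.exp_nat_mul, ← Real.exp_add]
    congr 1
    ring
  have key := hasSum_integral_of_summable_integral_norm (μ := volume.restrict (Ioi (0 : ℝ)))
    (F := fun (n : ℕ) x => (-1 : ℝ) ^ n * Real.exp (((n : ℝ) + 1) * η) * g n x)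
    (fun n => (hgi n).const_mul _) (by
      refine Summable.of_nonneg_of_le (fun n => integral_nonneg fun x => norm_nonneg _)
        (fun n => ?_) (hexp.mul_right (∫ x in Ioi (0 : ℝ), g 0 x))
      have : ∫ x in Ioi (0 : ℝ), ‖(-1 : ℝ) ^ n * Real.exp (((n : ℝ) + 1) * η) * g n x‖
          = ∫ x in Ioi (0 : ℝ), Real.exp (((n : ℝ) + 1) * η) * g n x := by
        refine setIntegral_congr_fun measurableSet_Ioi fun x hx => ?_
        simp [abs_of_nonneg (hg0 n x hx)]
      rw [this, integral_const_mul]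
      exact mul_le_mul_of_nonneg_left (hle n) (Real.exp_pos _).le)
  simp only [integral_const_mul] at key
  refine ⟨key.summable, ?_⟩
  rw [key.tsum_eq, Frel]
  refine setIntegral_congr_fun measurableSet_Ioi fun x hx => ?_
  have hx : 0 < x := hx
  have hy : Real.exp (η - x) < 1 := Real.exp_lt_one_iff.2 (by linarith)
  have hy0 := Real.exp_pos (η - x)
  have hs := (hasSum_geometric_of_abs_lt_one (r := -Real.exp (η - x))
    (by rw [abs_neg, abs_of_pos hy0]; exact hy)).mul_left
      (Real.exp (η - x) * (x ^ q * Real.sqrt (1 + β * x / 2)))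
  have heq : (fun n : ℕ => (-1 : ℝ) ^ n * Real.exp (((n : ℝ) + 1) * η) * g n x) =
      fun n : ℕ => Real.exp (η - x) * (x ^ q * Real.sqrt (1 + β * x / 2)) *
        (-Real.exp (η - x)) ^ n := by
    funext n
    have : Real.exp (((n : ℝ) + 1) * η) * Real.exp (-((n : ℝ) + 1) * x) =
        Real.exp (η - x) * Real.exp (η - x) ^ n := by
      rw [← Real.exp_nat_mul, ← Real.exp_add, ← Real.exp_add]
      congr 1
      ring
    rw [neg_pow (Real.exp (η - x))]
    simp only [hg]
    linear_combination (-1 : ℝ) ^ n * x ^ q * Real.sqrt (1 + β * x / 2) * this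
  rw [heq, hs.tsum_eq]
  have hz : Real.exp (x - η) = (Real.exp (η - x))⁻¹ := by
    rw [← Real.exp_neg]; congr 1; ring
  rw [hz, sub_neg_eq_add]
  generalize Real.exp (η - x) = y at hy0
  generalize Real.sqrt (1 + β * x / 2) = s
  generalize x ^ q = t
  have h1 : 1 + y ≠ 0 := by positivity
  have h2 : y⁻¹ + 1 ≠ 0 := by positivity
  rw [div_eq_iff h2, mul_assoc, mul_comm _ (y⁻¹ + 1)]
  field_simp
end

section
/- Fix q ≥ 0 and β ≥ 0, and for positive integers n set U_q(n,β) := (n^{q+1}/Γ(q+1)) ∫_0^∞ e^{-nx} x^q √(1+βx/2) dx. Then U_q(n,β) = 1 + O(1/n) as n → ∞; that is, the sequence n·(U_q(n,β) − 1) is bounded. -/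
open Real MeasureTheory Set

/-- The slowly varying factor `U_q(n,β)` appearing in the convergent expansion of the
relativistic Fermi-Dirac integral. -/
noncomputable def Useq (q β : ℝ) (n : ℕ) : ℝ :=
  ((n : ℝ) ^ (q + 1) / Real.Gamma (q + 1)) *
    ∫ x in Ioi (0 : ℝ), Real.exp (-(n : ℝ) * x) * x ^ q * Real.sqrt (1 + β * x / 2)

/-- Integrability of the Gamma-type integrand. -/
lemma aux_int (s n : ℝ) (hs : 0 ≤ s) (hn : 0 < n) :
    IntegrableOn (fun x : ℝ => Real.exp (-n * x) * x ^ s) (Ioi 0) := by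
  have h := integrableOn_rpow_mul_exp_neg_mul_rpow (p := 1) (s := s) (b := n)
    (by linarith) one_pos hn
  refine h.congr_fun (fun x _ => ?_) measurableSet_Ioi
  simp [mul_comm]

/-- Value of the Gamma-type integral. -/
lemma aux_val (s n : ℝ) (hs : 0 ≤ s) (hn : 0 < n) :
    ∫ x in Ioi (0 : ℝ), Real.exp (-n * x) * x ^ s = Real.Gamma (s + 1) / n ^ (s + 1) := by
  have h := Real.integral_rpow_mul_exp_neg_mul_Ioi (a := s + 1) (r := n) (by linarith) hn
  rw [one_div, Real.inv_rpow hn.le, add_sub_cancel_right] at h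
  rw [div_eq_inv_mul, ← h]
  refine setIntegral_congr_fun measurableSet_Ioi (fun x _ => ?_)
  simp [mul_comm]

/-- `U_q(n,β) = 1 + O(1/n)` as `n → ∞`: the sequence `n ⬝ (U_q(n,β) − 1)` is bounded. -/
theorem stmt1 (q β : ℝ) (hq : 0 ≤ q) (hβ : 0 ≤ β) :
    ∃ C : ℝ, ∀ n : ℕ, 1 ≤ n → |(n : ℝ) * (Useq q β n - 1)| ≤ C := by
  refine ⟨β / 4 * (q + 1), fun n hn1 => ?_⟩
  have hn : (0 : ℝ) < n := by exact_mod_cast hn1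
  have hG : 0 < Real.Gamma (q + 1) := Real.Gamma_pos_of_pos (by linarith)
  have hP : 0 < (n : ℝ) ^ (q + 1) := Real.rpow_pos_of_pos hn _
  have iA := aux_int q n hq hn
  have iB := (aux_int (q + 1) n (by linarith) hn).const_mul (β / 4)
  have vA := aux_val q n hq hn
  have vB := aux_val (q + 1) n (by linarith) hn
  have iAB := iA.add iB
  have vAB : ∫ x in Ioi (0 : ℝ), (Real.exp (-(n : ℝ) * x) * x ^ q
      + β / 4 * (Real.exp (-(n : ℝ) * x) * x ^ (q + 1)))
      = Real.Gamma (q + 1) / (n : ℝ) ^ (q + 1)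
        + β / 4 * (Real.Gamma (q + 1 + 1) / (n : ℝ) ^ (q + 1 + 1)) := by
    rw [integral_add iA iB, integral_const_mul, vA, vB]
  have lo : ∀ x ∈ Ioi (0 : ℝ), Real.exp (-(n : ℝ) * x) * x ^ q ≤
      Real.exp (-(n : ℝ) * x) * x ^ q * Real.sqrt (1 + β * x / 2) := by
    intro x hx
    have hx : 0 < x := hx
    have h1 : 1 ≤ Real.sqrt (1 + β * x / 2) := by
      rw [Real.one_le_sqrt]
      have : 0 ≤ β * x := by positivity
      linarith
    exact le_mul_of_one_le_right (by positivity) h1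
  have hi : ∀ x ∈ Ioi (0 : ℝ),
      Real.exp (-(n : ℝ) * x) * x ^ q * Real.sqrt (1 + β * x / 2) ≤
      Real.exp (-(n : ℝ) * x) * x ^ q
        + β / 4 * (Real.exp (-(n : ℝ) * x) * x ^ (q + 1)) := by
    intro x hx
    have hx : 0 < x := hx
    have hb : 0 ≤ β * x := by positivity
    have h1 : Real.sqrt (1 + β * x / 2) ≤ 1 + β * x / 4 := by
      rw [Real.sqrt_le_left (by linarith)]
      nlinarith [sq_nonneg (β * x)]
    have h2 : 0 ≤ Real.exp (-(n : ℝ) * x) * x ^ q := by positivity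
    rw [Real.rpow_add_one hx.ne']
    nlinarith [mul_le_mul_of_nonneg_left h1 h2]
  have iI : IntegrableOn (fun x : ℝ =>
      Real.exp (-(n : ℝ) * x) * x ^ q * Real.sqrt (1 + β * x / 2)) (Ioi 0) := by
    refine Integrable.mono' iAB (Measurable.aestronglyMeasurable (by fun_prop)) ?_
    filter_upwards [ae_restrict_mem measurableSet_Ioi] with x hx
    have hx' : 0 < x := hx
    rw [Real.norm_of_nonneg (by positivity)]
    exact hi x hx
  have L := setIntegral_mono_on iA iI measurableSet_Ioi lo
  have H := setIntegral_mono_on iI iAB measurableSet_Ioi hi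
  simp only [Pi.add_apply] at H
  rw [vA] at L
  rw [vAB, Real.Gamma_add_one (s := q + 1) (by linarith), Real.rpow_add_one hn.ne' (q + 1)] at H
  unfold Useq
  generalize (∫ x in Ioi (0 : ℝ),
    Real.exp (-(n : ℝ) * x) * x ^ q * Real.sqrt (1 + β * x / 2)) = I at L H
  have hk : 0 < (n : ℝ) ^ (q + 1) / Real.Gamma (q + 1) := by positivity
  have L' := mul_le_mul_of_nonneg_left L hk.le
  have H' := mul_le_mul_of_nonneg_left H hk.le
  have e1 : (n : ℝ) ^ (q + 1) / Real.Gamma (q + 1) *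
      (Real.Gamma (q + 1) / (n : ℝ) ^ (q + 1)) = 1 := by field_simp
  have e2 : (n : ℝ) ^ (q + 1) / Real.Gamma (q + 1) *
      (Real.Gamma (q + 1) / (n : ℝ) ^ (q + 1) + β / 4 * ((q + 1) * Real.Gamma (q + 1) /
        ((n : ℝ) ^ (q + 1) * n))) = 1 + β / 4 * (q + 1) / n := by field_simp
  rw [e1] at L'
  rw [e2] at H'
  rw [abs_of_nonneg (mul_nonneg hn.le (by linarith))]
  calc (n : ℝ) * ((n : ℝ) ^ (q + 1) / Real.Gamma (q + 1) * I - 1)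
      ≤ n * (β / 4 * (q + 1) / n) := mul_le_mul_of_nonneg_left (by linarith) hn.le
    _ = β / 4 * (q + 1) := by field_simp
end

section
/- Let q > 0, β > 0, 0 < c < 1 and η ∈ ℝ. For complex s with Re s > 0 define U_q(s,β) := ((2s/β)^{q+1}/Γ(q+1)) ∫_0^∞ e^{-(2s/β)t} t^q √(1+t) dt (principal branch of the power). Then F_q(η,β) = (Γ(q+1)/2) ∫_{-∞}^∞ e^{η(c+it)} U_q(c+it,β) / ((c+it)^{q+1} sin(π(c+it))) dt, where (c+it)^{q+1} uses the principal branch. -/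
open Real MeasureTheory Set

/-- The function `U_q(s,β)` for complex `s` with `Re s > 0` (principal branch of the power). -/
noncomputable def Uq (q β : ℝ) (s : ℂ) : ℂ :=
  ((2 * s / (β : ℂ)) ^ ((q : ℂ) + 1) / Complex.Gamma ((q : ℂ) + 1)) *
    ∫ t in Ioi (0 : ℝ), Complex.exp (-(2 * s / (β : ℂ)) * (t : ℂ)) *
      ((t ^ q * Real.sqrt (1 + t) : ℝ) : ℂ)


lemma aux_image : Set.image (fun y : ℝ => y / (1 + y)) (Ioi 0) = Ioo 0 1 := by
  ext x
  simp only [mem_image, mem_Ioi, mem_Ioo]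
  constructor
  · rintro ⟨y, hy, rfl⟩
    refine ⟨by positivity, ?_⟩
    rw [div_lt_one (by positivity)]; linarith
  · rintro ⟨h0, h1⟩
    have : 0 < 1 - x := by linarith
    refine ⟨x / (1 - x), by positivity, ?_⟩
    field_simp
    ring

lemma aux_deriv : ∀ y ∈ Ioi (0 : ℝ),
    HasDerivWithinAt (fun y : ℝ => y / (1 + y)) (1 / (1 + y) ^ 2) (Ioi 0) y := by
  intro y hy
  have hy' : (1 + y) ≠ 0 := by have : 0 < y := hy; positivity
  have := (hasDerivAt_id y).div ((hasDerivAt_id y).const_add 1) hy'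
  refine HasDerivAt.hasDerivWithinAt ?_
  have e : (1 * (1 + y) - y * 1) / (1 + y) ^ 2 = 1 / (1 + y) ^ 2 := by ring
  rw [← e]
  exact this

lemma aux_inj : InjOn (fun y : ℝ => y / (1 + y)) (Ioi 0) := by
  intro x hx y hy h
  have hx' : 0 < x := hx
  have hy' : 0 < y := hy
  simp only at h
  rw [div_eq_div_iff (by positivity) (by positivity)] at h
  linarith

lemma aux_integrand (s : ℂ) {y : ℝ} (hy : 0 < y) :
    |1 / (1 + y) ^ 2| • (((y / (1 + y) : ℝ) : ℂ) ^ (s - 1) *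
      (1 - ((y / (1 + y) : ℝ) : ℂ)) ^ ((1 - s) - 1)) =
    (y : ℂ) ^ (s - 1) • (1 / (1 + y) : ℂ) := by
  have h1 : (0 : ℝ) < 1 + y := by positivity
  have h1c : ((1 + y : ℝ) : ℂ) ≠ 0 := by exact_mod_cast h1.ne'
  have e : (1 - ((y / (1 + y) : ℝ) : ℂ)) = (((1 + y)⁻¹ : ℝ) : ℂ) := by
    rw [← Complex.ofReal_one, ← Complex.ofReal_sub]; congr 1; field_simp; ring
  rw [e, div_eq_mul_inv y, Complex.ofReal_mul,
    Complex.mul_cpow_ofReal_nonneg hy.le (by positivity), abs_of_pos (by positivity)]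
  have hz : (((1 + y)⁻¹ : ℝ) : ℂ) ≠ 0 := by simpa using h1c
  have : (((1 + y)⁻¹ : ℝ) : ℂ) ^ (s - 1) * (((1 + y)⁻¹ : ℝ) : ℂ) ^ ((1 - s) - 1) = 1 + y := by
    rw [← Complex.cpow_add _ _ hz]
    have : s - 1 + (1 - s - 1) = -1 := by ring
    rw [this, Complex.cpow_neg_one]
    simp
  rw [mul_assoc, this, Complex.real_smul, smul_eq_mul]
  have h2 : (1 + (y:ℂ)) ≠ 0 := by simpa using h1c
  push_cast
  field_simp

lemma mellin_eq {s : ℂ} (h0 : 0 < s.re) (h1 : s.re < 1) :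
    mellin (fun y : ℝ => (1 / (1 + y) : ℂ)) s = π / Complex.sin (π * s) := by
  have hb := Complex.Gamma_mul_Gamma_eq_betaIntegral (s := s) (t := 1 - s) h0 (by simpa using h1)
  rw [Complex.Gamma_mul_Gamma_one_sub] at hb
  rw [hb, add_sub_cancel, Complex.Gamma_one, one_mul, Complex.betaIntegral,
    intervalIntegral.integral_of_le zero_le_one, integral_Ioc_eq_integral_Ioo, ← aux_image,
    integral_image_eq_integral_abs_deriv_smul measurableSet_Ioi aux_deriv aux_inj, mellin]
  exact setIntegral_congr_fun measurableSet_Ioi fun y hy => (aux_integrand s hy).symm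

lemma mellin_conv {s : ℂ} (h0 : 0 < s.re) (h1 : s.re < 1) :
    MellinConvergent (fun y : ℝ => (1 / (1 + y) : ℂ)) s := by
  have hb := Complex.betaIntegral_convergent (u := s) (v := 1 - s) h0 (by simpa using h1)
  rw [intervalIntegrable_iff_integrableOn_Ioo_of_le zero_le_one, ← aux_image,
    integrableOn_image_iff_integrableOn_abs_deriv_smul measurableSet_Ioi aux_deriv aux_inj] at hb
  exact hb.congr_fun (fun y hy => aux_integrand s hy) measurableSet_Ioi

lemma sin_bound {c : ℝ} (hc0 : 0 < c) (hc1 : c < 1) (t : ℝ) :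
    Real.sin (π * c) * (1 + t ^ 2) ≤ ‖Complex.sin ((π : ℂ) * ((c : ℂ) + t * Complex.I))‖ := by
  have hs : 0 < Real.sin (π * c) := Real.sin_pos_of_pos_of_lt_pi (by positivity)
    (by nlinarith [pi_pos])
  have hcosh : 1 + t ^ 2 ≤ Real.cosh (π * t) := by
    have e : Real.cosh (π * t) = 1 + 2 * Real.sinh (π * t / 2) ^ 2 := by
      have := Real.cosh_two_mul (π * t / 2)
      have h2 := Real.cosh_sq (π * t / 2)
      rw [show 2 * (π * t / 2) = π * t by ring] at this
      linarith
    have h3 : (π * t / 2) ^ 2 ≤ Real.sinh (π * t / 2) ^ 2 := by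
      rw [sq_le_sq, Real.abs_sinh]
      exact Real.self_le_sinh_iff.2 (abs_nonneg _)
    have : t ^ 2 * 1 ≤ t ^ 2 * (π ^ 2) :=
      mul_le_mul_of_nonneg_left (by nlinarith [pi_gt_three]) (sq_nonneg t)
    have : t ^ 2 * 9 ≤ t ^ 2 * (π ^ 2) :=
      mul_le_mul_of_nonneg_left (by nlinarith [pi_gt_three]) (sq_nonneg t)
    nlinarith [sq_nonneg t]
  have e : Complex.sin ((π : ℂ) * ((c : ℂ) + t * Complex.I)) =
      ((Real.sin (π * c) * Real.cosh (π * t) : ℝ) : ℂ) +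
        ((Real.cos (π * c) * Real.sinh (π * t) : ℝ) : ℂ) * Complex.I := by
    rw [show (π : ℂ) * ((c : ℂ) + t * Complex.I) = ((π * c : ℂ)) + (π * t : ℂ) * Complex.I by ring,
      Complex.sin_add_mul_I]
    push_cast; rfl
  have hre : (Complex.sin ((π : ℂ) * ((c : ℂ) + t * Complex.I))).re =
      Real.sin (π * c) * Real.cosh (π * t) := by
    rw [e, Complex.add_re, Complex.ofReal_re, Complex.re_ofReal_mul]; simp
  calc _ ≤ Real.sin (π * c) * Real.cosh (π * t) := by gcongr
    _ ≤ _ := by rw [← hre]; exact Complex.re_le_norm _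

lemma K_int {c : ℝ} (hc0 : 0 < c) (hc1 : c < 1) :
    Integrable fun t : ℝ => (1 / Complex.sin ((π : ℂ) * ((c : ℂ) + t * Complex.I)) : ℂ) := by
  have hs : 0 < Real.sin (π * c) := Real.sin_pos_of_pos_of_lt_pi (by positivity)
    (by nlinarith [pi_pos])
  refine (integrable_inv_one_add_sq.const_mul (Real.sin (π * c))⁻¹).mono' ?_ ?_
  · apply Measurable.aestronglyMeasurable
    fun_prop
  · filter_upwards with t
    rw [norm_div, norm_one, one_div, ← mul_inv]
    exact inv_anti₀ (by positivity) (sin_bound hc0 hc1 t)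

lemma key {c : ℝ} (hc0 : 0 < c) (hc1 : c < 1) (u : ℝ) :
    ∫ t : ℝ, Complex.exp ((u : ℂ) * ((c : ℂ) + t * Complex.I)) *
      (1 / Complex.sin ((π : ℂ) * ((c : ℂ) + t * Complex.I))) = 2 * (1 / (1 + Real.exp (-u)) : ℝ) := by
  have hm : ∀ t : ℝ, mellin (fun y : ℝ => (1 / (1 + y) : ℂ)) ((c : ℂ) + t * Complex.I) =
      π * (1 / Complex.sin ((π : ℂ) * ((c : ℂ) + t * Complex.I))) := by
    intro t
    rw [mellin_eq (by simpa using hc0) (by simpa using hc1)]; ring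
  have hinv := mellinInv_mellin_eq c (fun y : ℝ => (1 / (1 + y) : ℂ)) (Real.exp_pos (-u))
    (mellin_conv (by simpa using hc0) (by simpa using hc1)) ?_ ?_
  · rw [mellinInv] at hinv
    simp_rw [hm] at hinv
    have h2 : ∀ t : ℝ, ((Real.exp (-u) : ℝ) : ℂ) ^ (-((c : ℂ) + t * Complex.I)) =
        Complex.exp ((u : ℂ) * ((c : ℂ) + t * Complex.I)) := by
      intro t
      rw [Complex.cpow_def_of_ne_zero (by exact_mod_cast (Real.exp_pos _).ne'),
        ← Complex.ofReal_log (Real.exp_pos _).le, Real.log_exp]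
      congr 1; push_cast; ring
    simp_rw [h2, smul_eq_mul, mul_left_comm _ (π : ℂ), integral_const_mul] at hinv
    have hpi : (π : ℂ) ≠ 0 := by exact_mod_cast pi_ne_zero
    push_cast at hinv ⊢
    rw [← hinv, Complex.real_smul]
    generalize (∫ (a : ℝ), _ : ℂ) = J
    push_cast
    field_simp
  · unfold Complex.VerticalIntegrable
    simp_rw [hm]
    exact (K_int hc0 hc1).const_mul _
  · have : (1 + ((Real.exp (-u) : ℝ) : ℂ)) ≠ 0 := by
      have : 0 < 1 + Real.exp (-u) := by positivity
      exact_mod_cast this.ne'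
    exact ContinuousAt.div (by fun_prop) (by fun_prop) this

lemma h_int {q β c : ℝ} (hq : 0 < q) (hβ : 0 < β) (hc0 : 0 < c) :
    IntegrableOn (fun x : ℝ => x ^ q * Real.sqrt (1 + β * x / 2) * Real.exp (-c * x)) (Ioi 0) := by
  have i1 := integrableOn_rpow_mul_exp_neg_mul_rpow (s := q) (p := 1) (b := c)
    (by linarith) one_pos hc0
  have i2 := integrableOn_rpow_mul_exp_neg_mul_rpow (s := q + 1) (p := 1) (b := c)
    (by linarith) one_pos hc0
  refine Integrable.mono' (i1.add (i2.const_mul (β / 2))) ?_ ?_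
  · apply Measurable.aestronglyMeasurable
    fun_prop
  · filter_upwards [ae_restrict_mem measurableSet_Ioi] with x hx
    have hx : 0 < x := hx
    have hs : Real.sqrt (1 + β * x / 2) ≤ 1 + β * x / 2 := by
      rw [Real.sqrt_le_left (by positivity)]
      have : 0 < β * x := by positivity
      nlinarith
    rw [Real.norm_of_nonneg (by positivity)]
    simp only [Pi.add_apply, rpow_one, Real.rpow_add hx]
    calc _ ≤ x ^ q * (1 + β * x / 2) * Real.exp (-c * x) := by gcongr
      _ = _ := by ring

lemma U_eq {q β : ℝ} (hq : 0 < q) (hβ : 0 < β) {s : ℂ} (hs : 0 < s.re) :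
    Complex.Gamma ((q : ℂ) + 1) * Uq q β s / s ^ ((q : ℂ) + 1) =
      ∫ x in Ioi (0 : ℝ), Complex.exp (-s * x) * ((x ^ q * Real.sqrt (1 + β * x / 2) : ℝ) : ℂ) := by
  have hG : Complex.Gamma ((q : ℂ) + 1) ≠ 0 := by
    apply Complex.Gamma_ne_zero_of_re_pos
    simp; linarith
  have hs0 : s ≠ 0 := by rintro rfl; simp at hs
  have hsq : s ^ ((q : ℂ) + 1) ≠ 0 := by
    simp [Complex.cpow_eq_zero_iff, hs0]
  have hb : 0 < 2 / β := by positivity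
  have hbc : (((2 / β : ℝ)) : ℂ) ≠ 0 := by exact_mod_cast hb.ne'
  have hpow : (2 * s / (β : ℂ)) ^ ((q : ℂ) + 1) =
      (((2 / β) ^ (q + 1) : ℝ) : ℂ) * s ^ ((q : ℂ) + 1) := by
    rw [show 2 * s / (β : ℂ) = ((2 / β : ℝ) : ℂ) * s by push_cast; ring,
      Complex.ofReal_cpow hb.le, Complex.cpow_def_of_ne_zero (mul_ne_zero hbc hs0),
      Complex.log_ofReal_mul hb hs0, Complex.cpow_def_of_ne_zero hbc,
      Complex.cpow_def_of_ne_zero hs0, ← Complex.exp_add, Complex.ofReal_log hb.le]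
    push_cast
    ring_nf
  have hsub := integral_comp_mul_left_Ioi (fun x : ℝ => Complex.exp (-s * x) *
    ((x ^ q * Real.sqrt (1 + β * x / 2) : ℝ) : ℂ)) 0 hb
  rw [mul_zero] at hsub
  have hpt : ∀ t ∈ Ioi (0 : ℝ), Complex.exp (-s * ((2 / β * t : ℝ) : ℂ)) *
      (((2 / β * t) ^ q * Real.sqrt (1 + β * (2 / β * t) / 2) : ℝ) : ℂ) =
      (((2 / β) ^ q : ℝ) : ℂ) * (Complex.exp (-(2 * s / (β : ℂ)) * (t : ℂ)) *
      ((t ^ q * Real.sqrt (1 + t) : ℝ) : ℂ)) := by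
    intro t ht
    have ht : 0 < t := ht
    rw [Real.mul_rpow hb.le ht.le, show 1 + β * (2 / β * t) / 2 = 1 + t by field_simp,
      show -s * ((2 / β * t : ℝ) : ℂ) = -(2 * s / (β : ℂ)) * (t : ℂ) by push_cast; ring]
    push_cast; ring
  rw [setIntegral_congr_fun measurableSet_Ioi hpt, integral_const_mul] at hsub
  rw [Uq, hpow]
  rw [Complex.real_smul, Complex.ofReal_inv] at hsub
  rw [Real.rpow_add hb, Real.rpow_one]
  generalize (∫ (x : ℝ) in Ioi 0, Complex.exp (-s * x) *
    ((x ^ q * Real.sqrt (1 + β * x / 2) : ℝ) : ℂ)) = J at hsub ⊢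
  generalize (∫ (a : ℝ) in Ioi 0, _ : ℂ) = J' at hsub ⊢
  rw [Complex.ofReal_mul]
  generalize ((2 / β : ℝ) : ℂ) = r at *
  generalize (((2 / β) ^ q : ℝ) : ℂ) = r' at *
  field_simp at hsub ⊢
  rw [← hsub]

theorem stmt2 (q β c η : ℝ) (hq : 0 < q) (hβ : 0 < β) (hc0 : 0 < c) (hc1 : c < 1) :
    (Frel q η β : ℂ) = (Complex.Gamma ((q : ℂ) + 1) / 2) *
      ∫ t : ℝ, Complex.exp ((η : ℂ) * ((c : ℂ) + t * Complex.I)) *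
          Uq q β ((c : ℂ) + t * Complex.I) /
        (((c : ℂ) + t * Complex.I) ^ ((q : ℂ) + 1) *
          Complex.sin ((π : ℂ) * ((c : ℂ) + t * Complex.I))) := by
  have hL : ∀ x : ℝ, ((x ^ q * Real.sqrt (1 + β * x / 2) / (Real.exp (x - η) + 1) : ℝ) : ℂ) =
      ∫ t : ℝ, (1 / 2 : ℂ) * (((x ^ q * Real.sqrt (1 + β * x / 2) : ℝ) : ℂ) *
        (Complex.exp (((η - x : ℝ) : ℂ) * ((c : ℂ) + t * Complex.I)) *
        (1 / Complex.sin ((π : ℂ) * ((c : ℂ) + t * Complex.I))))) := by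
    intro x
    rw [integral_const_mul, integral_const_mul, key hc0 hc1, neg_sub, add_comm (1 : ℝ)]
    push_cast
    ring
  have hF : Integrable (Function.uncurry fun (x : ℝ) (t : ℝ) =>
      (1 / 2 : ℂ) * (((x ^ q * Real.sqrt (1 + β * x / 2) : ℝ) : ℂ) *
        (Complex.exp (((η - x : ℝ) : ℂ) * ((c : ℂ) + t * Complex.I)) *
        (1 / Complex.sin ((π : ℂ) * ((c : ℂ) + t * Complex.I))))))
      ((volume.restrict (Ioi 0)).prod volume) := by
    have hp := ((h_int hq hβ hc0).mul_prod (K_int hc0 hc1).norm).const_mul (Real.exp (c * η))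
    refine hp.mono ?_ ?_
    · apply Measurable.aestronglyMeasurable
      unfold Function.uncurry
      fun_prop
    · filter_upwards with p
      obtain ⟨x, t⟩ := p
      simp only [Function.uncurry]
      rw [norm_mul, norm_mul, norm_mul, Complex.norm_exp, Complex.norm_real]
      simp only [norm_mul, norm_norm]
      rw [Real.norm_of_nonneg (Real.exp_pos _).le,
        Real.norm_of_nonneg (Real.exp_pos _).le]
      have e : (((η - x : ℝ) : ℂ) * ((c : ℂ) + t * Complex.I)).re = c * η + -c * x := by
        rw [Complex.re_ofReal_mul]; simp; ring
      rw [e, Real.exp_add]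
      have h12 : ‖(1 / 2 : ℂ)‖ ≤ 1 := by norm_num
      generalize ‖(1 / 2 : ℂ)‖ = w at *
      calc _ ≤ 1 * (‖x ^ q‖ * ‖√(1 + β * x / 2)‖ * (Real.exp (c * η) * Real.exp (-c * x) *
            ‖1 / Complex.sin ((π : ℂ) * ((c : ℂ) + t * Complex.I))‖)) := by gcongr
        _ = _ := by ring
        _ ≤ _ := le_refl _
  rw [Frel, ← integral_complex_ofReal]
  simp_rw [hL]
  rw [integral_integral_swap hF, ← integral_const_mul]
  congr 1
  ext t
  have hU := U_eq (s := (c : ℂ) + t * Complex.I) hq hβ (by simpa using hc0)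
  generalize (c : ℂ) + t * Complex.I = s at *
  have : Complex.Gamma ((q : ℂ) + 1) / 2 * (Complex.exp (η * s) * Uq q β s /
      (s ^ ((q : ℂ) + 1) * Complex.sin (π * s))) = (1 / 2 * Complex.exp (η * s) *
      (1 / Complex.sin (π * s))) * (Complex.Gamma ((q : ℂ) + 1) * Uq q β s / s ^ ((q : ℂ) + 1)) := by
    rw [div_mul_eq_div_div, div_eq_mul_inv, div_eq_mul_inv, div_eq_mul_inv, div_eq_mul_inv,
      div_eq_mul_inv]
    ring
  rw [this, hU, ← integral_const_mul]
  congr 1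
  ext x
  rw [show ((η - x : ℝ) : ℂ) * s = η * s + -s * x by push_cast; ring, Complex.exp_add]
  ring
end

section
/- Let q > 0, 0 < c < 1 and η ∈ ℝ. Then F_q(η) = (Γ(q+1)/2) ∫_{-∞}^∞ e^{η(c+it)} / ((c+it)^{q+1} sin(π(c+it))) dt, where (c+it)^{q+1} denotes the principal branch of the complex power. -/
open Real MeasureTheory Set

/-- The standard Fermi-Dirac integral. -/
noncomputable def Fstd (q η : ℝ) : ℝ :=
  ∫ x in Ioi (0 : ℝ), x ^ q / (Real.exp (x - η) + 1)

/-- Euler's integral: Mellin transform of `1/(1+u)`, integrand identity after substitution. -/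
lemma fd_aux_integrand (s : ℂ) {u : ℝ} (hu : 0 < u) :
    |((1 + u) ^ 2)⁻¹| • ((((u / (1 + u) : ℝ)) : ℂ) ^ (s - 1) *
      (1 - ((u / (1 + u) : ℝ) : ℂ)) ^ ((1 - s) - 1))
      = (u : ℂ) ^ (s - 1) • ((1 + u : ℝ)⁻¹ : ℂ) := by
  have h1 : (0 : ℝ) < 1 + u := by linarith
  have h1c : ((1 + u : ℝ) : ℂ) ≠ 0 := by exact_mod_cast h1.ne'
  have e1 : (1 - ((u / (1 + u) : ℝ) : ℂ)) = (((1 + u)⁻¹ : ℝ) : ℂ) := by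
    have : (1 + u)⁻¹ = 1 - u / (1 + u) := by field_simp; ring
    rw [this]; push_cast; ring
  have e2 : (((1 + u)⁻¹ : ℝ) : ℂ) ^ ((1 - s) - 1) = ((1 + u : ℝ) : ℂ) ^ s := by
    rw [show (1 - s) - 1 = -s by ring, Complex.cpow_neg, Complex.ofReal_inv,
      Complex.inv_cpow, inv_inv]
    rw [Complex.arg_ofReal_of_nonneg h1.le]
    exact pi_pos.ne
  have e3 : ((u / (1 + u) : ℝ) : ℂ) ^ (s - 1)
      = (u : ℂ) ^ (s - 1) * (((1 + u : ℝ) : ℂ) ^ (s - 1))⁻¹ := by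
    rw [div_eq_mul_inv, Complex.ofReal_mul,
      Complex.mul_cpow_ofReal_nonneg hu.le (inv_pos.2 h1).le, Complex.ofReal_inv,
      Complex.inv_cpow]
    rw [Complex.arg_ofReal_of_nonneg h1.le]
    exact pi_pos.ne
  rw [e1, e2, e3, Complex.cpow_sub _ _ h1c, Complex.cpow_one, abs_of_pos (by positivity)]
  have h2 : ((1 + u : ℝ) : ℂ) ^ s ≠ 0 := by
    rw [Complex.cpow_ne_zero_iff]; exact Or.inl h1c
  rw [Complex.real_smul, smul_eq_mul]
  push_cast at *
  field_simp

lemma fd_image : (fun u : ℝ => u / (1 + u)) '' Ioi 0 = Ioo 0 1 := by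
  ext y
  constructor
  · rintro ⟨u, hu, rfl⟩
    have hu : (0 : ℝ) < u := hu
    have h1 : (0 : ℝ) < 1 + u := by linarith
    exact ⟨by positivity, by rw [div_lt_one h1]; linarith⟩
  · rintro ⟨h0, h1⟩
    have h2 : (0 : ℝ) < 1 - y := by linarith
    refine ⟨y / (1 - y), by simp only [mem_Ioi]; positivity, ?_⟩
    simp only
    field_simp
    ring

lemma fd_deriv : ∀ u ∈ Ioi (0 : ℝ),
    HasDerivWithinAt (fun u : ℝ => u / (1 + u)) (((1 + u) ^ 2)⁻¹) (Ioi 0) u := by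
  intro u hu
  have hu : (0 : ℝ) < u := hu
  have h1 : (1 + u) ≠ 0 := by linarith
  have := ((hasDerivAt_id u).div ((hasDerivAt_id u).const_add 1) h1).hasDerivWithinAt (s := Ioi 0)
  convert! this using 1
  simp

lemma fd_inj : InjOn (fun u : ℝ => u / (1 + u)) (Ioi 0) := by
  intro a ha b hb h
  have ha : (0 : ℝ) < a := ha
  have hb : (0 : ℝ) < b := hb
  simp only at h
  rw [div_eq_div_iff (by linarith) (by linarith)] at h
  linarith

lemma fd_mellin (s : ℂ) (h0 : 0 < s.re) (h1 : s.re < 1) :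
    MellinConvergent (fun u : ℝ => ((1 + u : ℝ)⁻¹ : ℂ)) s ∧
    mellin (fun u : ℝ => ((1 + u : ℝ)⁻¹ : ℂ)) s = π / Complex.sin (π * s) := by
  have h1' : 0 < (1 - s).re := by simp; linarith
  constructor
  · have hB := Complex.betaIntegral_convergent h0 h1'
    rw [intervalIntegrable_iff_integrableOn_Ioo_of_le zero_le_one, ← fd_image,
      integrableOn_image_iff_integrableOn_abs_deriv_smul measurableSet_Ioi fd_deriv fd_inj] at hB
    exact hB.congr_fun (fun u hu => fd_aux_integrand s hu) measurableSet_Ioi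
  · have hG := Complex.Gamma_mul_Gamma_eq_betaIntegral h0 h1'
    rw [Complex.Gamma_mul_Gamma_one_sub] at hG
    rw [hG, add_sub_cancel, Complex.Gamma_one, one_mul, Complex.betaIntegral,
      intervalIntegral.integral_of_le zero_le_one, integral_Ioc_eq_integral_Ioo, ← fd_image,
      integral_image_eq_integral_abs_deriv_smul measurableSet_Ioi fd_deriv fd_inj, mellin]
    exact (setIntegral_congr_fun measurableSet_Ioi (fun u hu => fd_aux_integrand s hu)).symm

lemma fd_cosh (x : ℝ) : (1 + x ^ 2) / 4 ≤ Real.cosh x := by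
  rw [← Real.cosh_abs, Real.cosh_eq, ← sq_abs]
  have := Real.quadratic_le_exp_of_nonneg (abs_nonneg x)
  have h2 := Real.exp_pos (-|x|)
  nlinarith [abs_nonneg x]

lemma fd_sin_re (c t : ℝ) : (Complex.sin ((π : ℂ) * ((c : ℂ) + t * Complex.I))).re
    = Real.sin (π * c) * Real.cosh (π * t) := by
  rw [show (π : ℂ) * ((c : ℂ) + t * Complex.I) = ((π * c : ℝ) : ℂ) + ((π * t : ℝ) : ℂ) * Complex.I
    by push_cast; ring, Complex.sin_add_mul_I]
  simp [← Complex.ofReal_sin, ← Complex.ofReal_cos, ← Complex.ofReal_cosh, ← Complex.ofReal_sinh,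
    -Complex.ofReal_mul]

lemma fd_sin_pos (c : ℝ) (hc0 : 0 < c) (hc1 : c < 1) : 0 < Real.sin (π * c) :=
  Real.sin_pos_of_pos_of_lt_pi (by positivity) (by nlinarith [pi_pos])

lemma fd_sin_ne (c t : ℝ) (hc0 : 0 < c) (hc1 : c < 1) :
    Complex.sin ((π : ℂ) * ((c : ℂ) + t * Complex.I)) ≠ 0 := by
  intro h
  have := fd_sin_re c t
  rw [h, Complex.zero_re] at this
  have := mul_pos (fd_sin_pos c hc0 hc1) (Real.cosh_pos (π * t))
  linarith

lemma fd_sin_int (c : ℝ) (hc0 : 0 < c) (hc1 : c < 1) :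
    Integrable (fun t : ℝ => (Complex.sin ((π : ℂ) * ((c : ℂ) + t * Complex.I)))⁻¹) := by
  have hs := fd_sin_pos c hc0 hc1
  have hI := (integrable_inv_one_add_sq.comp_mul_left' pi_ne_zero).const_mul
    (4 / Real.sin (π * c))
  refine hI.mono' ?_ (Filter.Eventually.of_forall fun t => ?_)
  · apply Continuous.aestronglyMeasurable
    apply Continuous.inv₀ (by fun_prop)
    exact fun t => fd_sin_ne c t hc0 hc1
  · rw [norm_inv]
    have h1 : Real.sin (π * c) * ((1 + (π * t) ^ 2) / 4)
        ≤ ‖Complex.sin ((π : ℂ) * ((c : ℂ) + t * Complex.I))‖ := by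
      refine le_trans ?_ (Complex.abs_re_le_norm _)
      rw [fd_sin_re]
      exact le_trans (mul_le_mul_of_nonneg_left (fd_cosh _) hs.le) (le_abs_self _)
    refine (inv_anti₀ (by positivity) h1).trans (le_of_eq ?_)
    field_simp

/-- Inverse Mellin representation of the Fermi function. -/
lemma fd_inv (c y : ℝ) (hc0 : 0 < c) (hc1 : c < 1) :
    ∫ t : ℝ, Complex.exp (-(((c : ℂ) + t * Complex.I) * y)) *
      (Complex.sin ((π : ℂ) * ((c : ℂ) + t * Complex.I)))⁻¹
      = 2 * ((Real.exp y + 1 : ℝ)⁻¹ : ℂ) := by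
  have hm : ∀ t : ℝ, mellin (fun u : ℝ => ((1 + u : ℝ)⁻¹ : ℂ)) ((c : ℂ) + t * Complex.I)
      = π / Complex.sin ((π : ℂ) * ((c : ℂ) + t * Complex.I)) := fun t =>
    (fd_mellin _ (by simpa using hc0) (by simpa using hc1)).2
  have key := mellinInv_mellin_eq c (fun u : ℝ => ((1 + u : ℝ)⁻¹ : ℂ)) (Real.exp_pos y)
    (fd_mellin c (by simpa using hc0) (by simpa using hc1)).1
    (by
      unfold Complex.VerticalIntegrable
      simp_rw [hm, div_eq_mul_inv]
      exact (fd_sin_int c hc0 hc1).const_mul _)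
    (by
      have : (1 + Real.exp y) ≠ 0 := by positivity
      apply ContinuousAt.inv₀
      · fun_prop
      · exact_mod_cast this)
  rw [mellinInv] at key
  have e : ∀ t : ℝ, ((Real.exp y : ℝ) : ℂ) ^ (-((c : ℂ) + t * Complex.I)) •
      mellin (fun u : ℝ => ((1 + u : ℝ)⁻¹ : ℂ)) ((c : ℂ) + t * Complex.I)
      = π * (Complex.exp (-(((c : ℂ) + t * Complex.I) * y)) *
      (Complex.sin ((π : ℂ) * ((c : ℂ) + t * Complex.I)))⁻¹) := by
    intro t
    rw [hm, Complex.cpow_def_of_ne_zero (by exact_mod_cast (Real.exp_pos y).ne'),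
      ← Complex.ofReal_log (Real.exp_pos y).le, Real.log_exp, smul_eq_mul,
      show (y : ℂ) * -((c : ℂ) + t * Complex.I) = -(((c : ℂ) + t * Complex.I) * y) by ring]
    ring
  simp_rw [e] at key
  rw [integral_const_mul, Complex.real_smul] at key
  rw [add_comm (Real.exp y) 1, ← key]
  generalize (∫ t : ℝ, Complex.exp (-(((c : ℂ) + t * Complex.I) * y)) *
      (Complex.sin ((π : ℂ) * ((c : ℂ) + t * Complex.I)))⁻¹) = J
  have := Complex.ofReal_ne_zero.2 pi_ne_zero
  push_cast
  field_simp

lemma fd_int_real (q b : ℝ) (hq : 0 < q) (hb : 0 < b) :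
    IntegrableOn (fun x : ℝ => x ^ q * Real.exp (-b * x)) (Ioi 0) := by
  simpa using integrableOn_rpow_mul_exp_neg_mul_rpow (p := 1) (s := q) (by linarith) one_pos hb

lemma fd_meas (q : ℝ) (hq : 0 < q) (r : ℂ) :
    AEStronglyMeasurable (fun x : ℝ => ((x ^ q : ℝ) : ℂ) * Complex.exp (-(r * x)))
      (volume.restrict (Ioi 0)) := by
  apply Continuous.aestronglyMeasurable
  have : Continuous fun x : ℝ => x ^ q := Real.continuous_rpow_const hq.le
  fun_prop

lemma fd_norm (q : ℝ) (r : ℂ) {x : ℝ} (hx : 0 < x) :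
    ‖((x ^ q : ℝ) : ℂ) * Complex.exp (-(r * x))‖ = x ^ q * Real.exp (-r.re * x) := by
  rw [norm_mul, Complex.norm_real, Complex.norm_exp, Real.norm_of_nonneg (by positivity)]
  simp

lemma fd_int (q : ℝ) (hq : 0 < q) (r : ℂ) (hr : 0 < r.re) :
    IntegrableOn (fun x : ℝ => ((x ^ q : ℝ) : ℂ) * Complex.exp (-(r * x))) (Ioi 0) := by
  refine (fd_int_real q r.re hq hr).mono' (fd_meas q hq r) ?_
  filter_upwards [ae_restrict_mem measurableSet_Ioi] with x hx
  exact (fd_norm q r hx).le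

/-- The complex Laplace transform of `x^q`. -/
lemma fd_laplace (q : ℝ) (hq : 0 < q) (r : ℂ) (hr : 0 < r.re) :
    ∫ x in Ioi (0 : ℝ), ((x ^ q : ℝ) : ℂ) * Complex.exp (-(r * x))
      = (Real.Gamma (q + 1) : ℂ) / r ^ ((q : ℂ) + 1) := by
  have hopen : IsOpen {z : ℂ | 0 < z.re} := isOpen_lt continuous_const Complex.continuous_re
  have hF : AnalyticOnNhd ℂ (fun r : ℂ => ∫ x in Ioi (0 : ℝ),
      ((x ^ q : ℝ) : ℂ) * Complex.exp (-(r * x))) {z : ℂ | 0 < z.re} := by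
    apply DifferentiableOn.analyticOnNhd _ hopen
    intro r hr
    have hr : 0 < r.re := hr
    refine DifferentiableAt.differentiableWithinAt ?_
    have hS : {z : ℂ | r.re / 2 < z.re} ∈ nhds r :=
      (isOpen_lt continuous_const Complex.continuous_re).mem_nhds
        (show r.re / 2 < r.re by linarith)
    refine (hasDerivAt_integral_of_dominated_loc_of_deriv_le
      (F' := fun (z : ℂ) (x : ℝ) => -(((x ^ (q + 1) : ℝ) : ℂ) * Complex.exp (-(z * x))))
      (bound := fun x => x ^ (q + 1) * Real.exp (-(r.re / 2) * x)) hS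
      (Filter.Eventually.of_forall fun z => fd_meas q hq z) (fd_int q hq r hr)
      (fd_meas (q + 1) (by linarith) r).neg ?_
      (fd_int_real (q + 1) (r.re / 2) (by linarith) (by linarith)) ?_).2.differentiableAt
    · filter_upwards [ae_restrict_mem measurableSet_Ioi] with x hx z hz
      have hx : 0 < x := hx
      have hz : r.re / 2 < z.re := hz
      rw [norm_neg, fd_norm _ _ hx]
      gcongr
    · filter_upwards [ae_restrict_mem measurableSet_Ioi] with x hx z hz
      have hx : 0 < x := hx
      have h := ((((hasDerivAt_id z).mul_const (x : ℂ)).neg).cexp).const_mul ((x ^ q : ℝ) : ℂ)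
      convert! h using 1
      rw [Real.rpow_add hx, Real.rpow_one]
      push_cast
      simp
      ring
  have hG : AnalyticOnNhd ℂ (fun r : ℂ => (Real.Gamma (q + 1) : ℂ) / r ^ ((q : ℂ) + 1))
      {z : ℂ | 0 < z.re} := by
    apply DifferentiableOn.analyticOnNhd _ hopen
    intro r hr
    have hr : 0 < r.re := hr
    refine DifferentiableAt.differentiableWithinAt ?_
    refine (differentiableAt_const _).div
      (differentiableAt_id.cpow_const (Or.inl hr)) ?_
    rw [Complex.cpow_ne_zero_iff]
    left
    rintro rfl
    simp at hr
  have hconn : IsPreconnected {z : ℂ | 0 < z.re} :=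
    (convex_halfSpace_re_gt 0).isPreconnected
  refine hF.eqOn_of_preconnected_of_frequently_eq hG hconn (z₀ := 1)
    (by simp) ?_ hr
  have hreal : ∀ b : ℝ, 0 < b → ∫ x in Ioi (0 : ℝ), ((x ^ q : ℝ) : ℂ) * Complex.exp (-((b : ℂ) * x))
      = (Real.Gamma (q + 1) : ℂ) / (b : ℂ) ^ ((q : ℂ) + 1) := by
    intro b hb
    have h := Real.integral_rpow_mul_exp_neg_mul_Ioi (a := q + 1) (by linarith) hb
    rw [add_sub_cancel_right] at h
    have h2 := congrArg (fun x : ℝ => (x : ℂ)) h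
    simp only [← integral_complex_ofReal] at h2
    push_cast at h2 ⊢
    rw [h2, Complex.ofReal_cpow (by positivity)]
    push_cast
    rw [one_div, Complex.inv_cpow _ _ (by
      rw [Complex.arg_ofReal_of_nonneg hb.le]; exact pi_pos.ne)]
    ring
  have ht : Filter.Tendsto (fun n : ℕ => ((1 + 1 / ((n : ℝ) + 1) : ℝ) : ℂ)) Filter.atTop
      (nhdsWithin 1 {1}ᶜ) := by
    rw [tendsto_nhdsWithin_iff]
    constructor
    · have h := (tendsto_one_div_add_atTop_nhds_zero_nat (𝕜 := ℝ)).const_add 1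
      have h2 := (Complex.continuous_ofReal.tendsto _).comp h
      simpa [Function.comp_def] using h2
    · refine Filter.Eventually.of_forall fun n => ?_
      simp only [mem_compl_iff, mem_singleton_iff]
      have : (1 + 1 / ((n : ℝ) + 1) : ℝ) ≠ 1 := by
        have : (0 : ℝ) < 1 / ((n : ℝ) + 1) := by positivity
        linarith
      exact_mod_cast this
  refine ht.frequently (Filter.Eventually.frequently ?_)
  exact Filter.Eventually.of_forall fun n => hreal _ (by positivity)

theorem stmt3 (q c η : ℝ) (hq : 0 < q) (hc0 : 0 < c) (hc1 : c < 1) :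
    (Fstd q η : ℂ) = ((Real.Gamma (q + 1) : ℂ) / 2) *
      ∫ t : ℝ, Complex.exp ((η : ℂ) * ((c : ℂ) + t * Complex.I)) /
        (((c : ℂ) + t * Complex.I) ^ ((q : ℂ) + 1) *
          Complex.sin ((π : ℂ) * ((c : ℂ) + t * Complex.I))) := by
  let K : ℝ → ℝ → ℂ := fun x t => ((x ^ q : ℝ) : ℂ) *
    Complex.exp (-(((c : ℂ) + t * Complex.I) * x)) *
    (Complex.exp ((η : ℂ) * ((c : ℂ) + t * Complex.I)) *
      (Complex.sin ((π : ℂ) * ((c : ℂ) + t * Complex.I)))⁻¹)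
  have hK : Integrable (Function.uncurry K) ((volume.restrict (Ioi 0)).prod volume) := by
    have hprod := ((fd_int_real q c hq hc0).mul_prod
      ((fd_sin_int c hc0 hc1).norm.const_mul (Real.exp (η * c))))
    refine hprod.mono' ?_ ?_
    · apply Continuous.aestronglyMeasurable
      have h1 : Continuous fun x : ℝ => x ^ q := Real.continuous_rpow_const hq.le
      have h2 : Continuous fun t : ℝ =>
          (Complex.sin ((π : ℂ) * ((c : ℂ) + t * Complex.I)))⁻¹ :=
        Continuous.inv₀ (by fun_prop) (fun t => fd_sin_ne c t hc0 hc1)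
      have h3 := h1.comp (continuous_fst (X := ℝ) (Y := ℝ))
      have h4 := h2.comp (continuous_snd (X := ℝ) (Y := ℝ))
      simp only [Function.comp_def] at h3 h4
      simp only [K, Function.uncurry_def]
      fun_prop
    · have : ∀ᵐ z : ℝ × ℝ ∂((volume.restrict (Ioi 0)).prod volume), z.1 ∈ Ioi (0 : ℝ) :=
        Measure.quasiMeasurePreserving_fst.ae (ae_restrict_mem measurableSet_Ioi)
      filter_upwards [this] with z hz
      have hz : 0 < z.1 := hz
      simp only [K, Function.uncurry_def]
      rw [norm_mul, fd_norm _ _ hz, norm_mul, Complex.norm_exp]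
      simp
  have h1 : ∀ x : ℝ, ∫ t : ℝ, K x t = ((2 * (x ^ q / (Real.exp (x - η) + 1)) : ℝ) : ℂ) := by
    intro x
    have e : ∀ t : ℝ, K x t = ((x ^ q : ℝ) : ℂ) *
        (Complex.exp (-(((c : ℂ) + t * Complex.I) * ((x - η : ℝ) : ℂ))) *
          (Complex.sin ((π : ℂ) * ((c : ℂ) + t * Complex.I)))⁻¹) := by
      intro t
      have : Complex.exp (-(((c : ℂ) + t * Complex.I) * ((x - η : ℝ) : ℂ)))
          = Complex.exp (-(((c : ℂ) + t * Complex.I) * x)) *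
            Complex.exp ((η : ℂ) * ((c : ℂ) + t * Complex.I)) := by
        rw [← Complex.exp_add]; push_cast; ring_nf
      rw [this]
      simp only [K]
      ring
    simp_rw [e]
    rw [integral_const_mul, fd_inv c _ hc0 hc1]
    push_cast
    ring
  have h2 : ∀ t : ℝ, ∫ x in Ioi (0 : ℝ), K x t = (Real.Gamma (q + 1) : ℂ) *
      (Complex.exp ((η : ℂ) * ((c : ℂ) + t * Complex.I)) /
        (((c : ℂ) + t * Complex.I) ^ ((q : ℂ) + 1) *
          Complex.sin ((π : ℂ) * ((c : ℂ) + t * Complex.I)))) := by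
    intro t
    simp only [K]
    rw [integral_mul_const, fd_laplace q hq _ (by simpa using hc0)]
    rw [div_eq_mul_inv, div_eq_mul_inv, mul_inv]
    ring
  have hswap := integral_integral_swap hK
  simp_rw [h1, h2] at hswap
  rw [integral_const_mul, integral_complex_ofReal, integral_const_mul] at hswap
  rw [Fstd, div_mul_eq_mul_div, ← hswap]
  push_cast
  ring
end

section
/- Let q ≥ 0 and η < 0. Then the series Σ_{n=1}^∞ (-1)^{n-1} e^{nη}/n^{q+1} converges and F_q(η) = Γ(q+1) Σ_{n=1}^∞ (-1)^{n-1} e^{nη}/n^{q+1}. -/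
open Real MeasureTheory Set

theorem stmt4 (q η : ℝ) (hq : 0 ≤ q) (hη : η < 0) :
    Summable (fun n : ℕ => (-1 : ℝ) ^ n * Real.exp (((n : ℝ) + 1) * η) / ((n : ℝ) + 1) ^ (q + 1)) ∧
    Fstd q η = Real.Gamma (q + 1) *
      ∑' n : ℕ, (-1 : ℝ) ^ n * Real.exp (((n : ℝ) + 1) * η) / ((n : ℝ) + 1) ^ (q + 1) := by
  have hr0 : 0 ≤ Real.exp η := (Real.exp_pos η).le
  have hr1 : Real.exp η < 1 := by rw [← Real.exp_zero]; exact Real.exp_lt_exp.mpr hη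
  -- the absolute values are summable
  have habs : Summable (fun n : ℕ => Real.exp (((n : ℝ) + 1) * η) / ((n : ℝ) + 1) ^ (q + 1)) := by
    refine Summable.of_nonneg_of_le (fun n => by positivity) (fun n => ?_)
      (summable_geometric_of_lt_one hr0 hr1)
    have h1 : (1 : ℝ) ≤ ((n : ℝ) + 1) ^ (q + 1) :=
      Real.one_le_rpow (by linarith [n.cast_nonneg (α := ℝ)]) (by linarith)
    refine (div_le_self (Real.exp_pos _).le h1).trans ?_
    rw [← Real.exp_nat_mul]
    exact Real.exp_le_exp.mpr (by nlinarith)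
  have hsum : Summable (fun n : ℕ =>
      (-1 : ℝ) ^ n * Real.exp (((n : ℝ) + 1) * η) / ((n : ℝ) + 1) ^ (q + 1)) := by
    refine Summable.of_norm (habs.congr fun n => ?_)
    have h1 : (0 : ℝ) < ((n : ℝ) + 1) ^ (q + 1) := by positivity
    rw [norm_div, norm_mul, norm_pow, norm_neg, norm_one, one_pow, one_mul,
      Real.norm_of_nonneg (Real.exp_pos _).le, Real.norm_of_nonneg h1.le]
  refine ⟨hsum, ?_⟩
  -- the geometric series
  have hF : ∀ t ∈ Ioi (0 : ℝ), HasSum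
      (fun n : ℕ => (((-1 : ℝ) ^ n * Real.exp (((n : ℝ) + 1) * η) : ℝ) : ℂ) *
        (Real.exp (-((n : ℝ) + 1) * t) : ℂ)) ((1 / (Real.exp (t - η) + 1) : ℝ) : ℂ) := by
    intro t ht
    have ht : 0 < t := ht
    simp_rw [← Complex.ofReal_mul]
    rw [Complex.hasSum_ofReal]
    have hlt : Real.exp (η - t) < 1 := by
      rw [← Real.exp_zero]; exact Real.exp_lt_exp.mpr (by linarith)
    have hg := (hasSum_geometric_of_abs_lt_one (r := -Real.exp (η - t))
      (by rw [abs_neg, abs_of_pos (Real.exp_pos _)]; exact hlt)).mul_left (Real.exp (η - t))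
    have e1 : 1 / (Real.exp (t - η) + 1) = Real.exp (η - t) * (1 - -Real.exp (η - t))⁻¹ := by
      have : Real.exp (t - η) = (Real.exp (η - t))⁻¹ := by rw [← Real.exp_neg]; ring_nf
      rw [this]
      have := Real.exp_pos (η - t)
      rw [sub_neg_eq_add]
      field_simp
    rw [e1]
    refine (congrArg (fun f : ℕ → ℝ => HasSum f _) (funext fun n => ?_)).mp hg
    symm
    rw [neg_pow (Real.exp (η - t)), mul_assoc, ← Real.exp_add, mul_left_comm, ← Real.exp_nat_mul, ← Real.exp_add]
    ring_nf
  have hM := hasSum_mellin (ι := ℕ)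
    (a := fun n => (((-1 : ℝ) ^ n * Real.exp (((n : ℝ) + 1) * η) : ℝ) : ℂ))
    (p := fun n => (n : ℝ) + 1) (s := ((q + 1 : ℝ) : ℂ))
    (fun n => Or.inr (by positivity)) (by rw [Complex.ofReal_re]; linarith) hF
    (by
      refine habs.congr fun n => ?_
      rw [Complex.norm_real, norm_mul, norm_pow, norm_neg, norm_one, one_pow, one_mul,
        Real.norm_of_nonneg (Real.exp_pos _).le, Complex.ofReal_re])
  have hmel : mellin (fun t : ℝ => ((1 / (Real.exp (t - η) + 1) : ℝ) : ℂ)) ((q + 1 : ℝ) : ℂ)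
      = ((Fstd q η : ℝ) : ℂ) := by
    rw [mellin, Fstd, ← integral_complex_ofReal]
    refine setIntegral_congr_fun measurableSet_Ioi fun t ht => ?_
    have ht : 0 < t := ht
    have e : ((q + 1 : ℝ) : ℂ) - 1 = (q : ℂ) := by push_cast; ring
    simp only [smul_eq_mul]
    rw [e, ← Complex.ofReal_cpow ht.le, ← Complex.ofReal_mul, mul_one_div]
  rw [hmel] at hM
  have hR : HasSum (fun n : ℕ => Real.Gamma (q + 1) *
      ((-1 : ℝ) ^ n * Real.exp (((n : ℝ) + 1) * η) / ((n : ℝ) + 1) ^ (q + 1))) (Fstd q η) := by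
    rw [← Complex.hasSum_ofReal]
    convert hM using 2 with n
    have hn : (0 : ℝ) ≤ (n : ℝ) + 1 := by positivity
    rw [← Complex.ofReal_cpow hn, Complex.Gamma_ofReal, ← Complex.ofReal_mul,
      ← Complex.ofReal_div]
    congr 1
    ring
  rw [← hR.tsum_eq, tsum_mul_left]
end

section
/- Let β > 0, let q ≥ 0 be such that q is not of the form k + 1/2 for a nonnegative integer k, and let 0 < c < 1. Define f_2(s) = (πs/sin(πs)) · M(−1/2; −q−1/2; 2s/β) and F_q^{(2)}(η,β) = (1/(2π)) ∫_{-∞}^∞ e^{η(c+it)} f_2(c+it)/(c+it)^{q+5/2} dt (principal branch). Define coefficients a_n = Σ_{j: 2j ≤ n} τ_{2j} · (2/β)^{n−2j} (−1/2)_{n−2j} / ((−q−1/2)_{n−2j} (n−2j)!). Then for every η > 0 the series S(η) := sin(πq) Σ_{n=1}^∞ (−1)^n (e^{−nη}/n^{q+1}) M(−1/2; −q−1/2; −2n/β) converges, and for every integer N ≥ 1, as η → +∞, F_q^{(2)}(η,β) − S(η) − η^{q+3/2} Σ_{n=0}^{N−1} a_n/(Γ(q+5/2−n) η^n) = O(η^{q+3/2−N}).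 -/
open Real MeasureTheory Set Finset Filter Asymptotics

/-- Kummer's confluent hypergeometric function `M(a;b;z)` as a power series. -/
noncomputable def kummerM (a b z : ℂ) : ℂ :=
  ∑' k : ℕ, (ascPochhammer ℂ k).eval a /
      ((ascPochhammer ℂ k).eval b * (k.factorial : ℂ)) * z ^ k

/-- The coefficients `τ_{2j}`: `τ_0 = 1` and `τ_{2j} = 2(1 − 2^{1−2j}) ζ(2j)` for `j ≥ 1`. -/
noncomputable def tau2 (j : ℕ) : ℂ :=
  if j = 0 then 1 else 2 * (1 - (2 : ℂ) ^ (1 - 2 * (j : ℤ))) * riemannZeta (2 * j)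

/-- The function `f_2(s)`. -/
noncomputable def f2 (q β : ℝ) (s : ℂ) : ℂ :=
  (π : ℂ) * s / Complex.sin ((π : ℂ) * s) *
    kummerM (-1 / 2) (-(q : ℂ) - 1 / 2) (2 * s / (β : ℂ))

/-- The function `F_q^{(2)}(η,β)` (principal branch for the complex power). -/
noncomputable def F2 (q β c η : ℝ) : ℂ :=
  (1 / (2 * (π : ℂ))) * ∫ t : ℝ,
    Complex.exp ((η : ℂ) * ((c : ℂ) + t * Complex.I)) *
      f2 q β ((c : ℂ) + t * Complex.I) /
        ((c : ℂ) + t * Complex.I) ^ ((q : ℂ) + 5 / 2)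

/-- The coefficients `a_n`. -/
noncomputable def acoef (q β : ℝ) (n : ℕ) : ℂ :=
  ∑ j ∈ Finset.range (n / 2 + 1),
    tau2 j * (2 / (β : ℂ)) ^ (n - 2 * j) *
      (ascPochhammer ℂ (n - 2 * j)).eval (-1 / 2) /
        ((ascPochhammer ℂ (n - 2 * j)).eval (-(q : ℂ) - 1 / 2) *
          ((n - 2 * j).factorial : ℂ))

/-- The general term of the exponentially small convergent series (the series starts at `n = 1`,
here re-indexed by `n = m + 1`). -/
noncomputable def Sterm (q β η : ℝ) (m : ℕ) : ℂ :=
  (-1 : ℂ) ^ (m + 1) *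
    ((Real.exp (-((m : ℝ) + 1) * η) / ((m : ℝ) + 1) ^ (q + 1) : ℝ) : ℂ) *
      kummerM (-1 / 2) (-(q : ℂ) - 1 / 2) (-2 * ((m : ℂ) + 1) / (β : ℂ))

/-- The sum `S(η)`. -/
noncomputable def Sfun (q β η : ℝ) : ℂ :=
  ((Real.sin (π * q) : ℝ) : ℂ) * ∑' m : ℕ, Sterm q β η m

noncomputable def kco (a b : ℂ) (k : ℕ) : ℂ :=
  (ascPochhammer ℂ k).eval a / ((ascPochhammer ℂ k).eval b * (k.factorial : ℂ))

lemma asc_ne_zero (b : ℂ) (hb : ∀ k : ℕ, b + k ≠ 0) (k : ℕ) :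
    (ascPochhammer ℂ k).eval b ≠ 0 := by
  induction k with
  | zero => simp
  | succ k ih => rw [ascPochhammer_succ_eval]; exact mul_ne_zero ih (hb k)

lemma asc_succ_left (a : ℂ) (k : ℕ) :
    (ascPochhammer ℂ (k+1)).eval a = a * (ascPochhammer ℂ k).eval (a+1) := by
  rw [ascPochhammer_succ_left]; simp [Polynomial.eval_comp]

lemma kco_succ (a b : ℂ) (hb : ∀ k : ℕ, b + k ≠ 0) (k : ℕ) :
    kco a b (k+1) = kco a b k * ((a + k) / ((b + k) * (k + 1))) := by
  have h1 := asc_ne_zero b hb k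
  have h2 := hb k
  have h3 : (k.factorial : ℂ) ≠ 0 := by exact_mod_cast k.factorial_ne_zero
  have h4 : (k + 1 : ℂ) ≠ 0 := by exact_mod_cast k.succ_ne_zero
  unfold kco
  rw [ascPochhammer_succ_eval, ascPochhammer_succ_eval, Nat.factorial_succ]
  push_cast
  field_simp

lemma kratio_tendsto (a b z : ℂ) :
    Tendsto (fun k : ℕ => (a + k) / ((b + k) * (k + 1)) * z) atTop (nhds 0) := by
  have h1 : Tendsto (fun k : ℕ => (a + k) / (b + k)) atTop (nhds (1:ℂ)) := by
    have := tendsto_add_mul_div_add_mul_atTop_nhds (𝕜 := ℂ) a b 1 (d := 1) one_ne_zero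
    simpa using this
  have h2 : Tendsto (fun k : ℕ => (1:ℂ) / (k + 1)) atTop (nhds 0) :=
    tendsto_one_div_add_atTop_nhds_zero_nat (𝕜 := ℂ)
  have := (h1.mul h2).mul_const z
  simp only [mul_zero, zero_mul] at this
  refine this.congr fun k => ?_
  rw [div_mul_div_comm, mul_one]

lemma kterm_summable (a b : ℂ) (hb : ∀ k : ℕ, b + k ≠ 0) (z : ℂ) :
    Summable (fun k : ℕ => ‖kco a b k * z ^ k‖) := by
  have h := (kratio_tendsto a b z).norm
  rw [norm_zero] at h
  have he : ∀ᶠ k : ℕ in atTop, ‖(a + k) / ((b + k) * (k + 1)) * z‖ ≤ 1/2 :=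
    h.eventually_le_const (by norm_num)
  refine summable_of_ratio_norm_eventually_le (r := 1/2) (by norm_num) ?_
  filter_upwards [he] with k hk
  rw [norm_norm, norm_norm, kco_succ a b hb, pow_succ]
  calc _ = ‖(a + k) / ((b + k) * (k + 1)) * z‖ * ‖kco a b k * z ^ k‖ := by
        rw [← norm_mul]; congr 1; ring
    _ ≤ _ := by gcongr

lemma kummer_hasSum (a b : ℂ) (hb : ∀ k : ℕ, b + k ≠ 0) (z : ℂ) :
    HasSum (fun k : ℕ => kco a b k * z ^ k) (kummerM a b z) :=
  (kterm_summable a b hb z).of_norm.hasSum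

lemma hb_succ {b : ℂ} (hb : ∀ k : ℕ, b + k ≠ 0) : ∀ k : ℕ, b + 1 + k ≠ 0 := by
  intro k; have := hb (k+1); push_cast at this; rwa [add_assoc, add_comm (1:ℂ)]

lemma kco_rel1 (a b : ℂ) (hb : ∀ k : ℕ, b + k ≠ 0) (k : ℕ) :
    kco a b (k+1) = kco a (b+1) (k+1) + a / (b * (b+1)) * kco (a+1) (b+1+1) k := by
  have h0 := hb 0
  have h1 := hb 1
  have h2 := asc_ne_zero (b+1+1) (hb_succ (hb_succ hb)) k
  have h5 := hb (k+1)
  have h3 : (k.factorial : ℂ) ≠ 0 := by exact_mod_cast k.factorial_ne_zero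
  have h4 : (k + 1 : ℂ) ≠ 0 := by exact_mod_cast k.succ_ne_zero
  have h6 := asc_ne_zero (b+1) (hb_succ hb) k
  have h7 : (ascPochhammer ℂ k).eval (b+1) * (b + 1 + k) =
      (b+1) * (ascPochhammer ℂ k).eval (b+1+1) := by
    rw [← asc_succ_left, ascPochhammer_succ_eval]
  unfold kco
  rw [asc_succ_left a, asc_succ_left b, asc_succ_left (b+1), Nat.factorial_succ]
  push_cast at *
  simp only [add_zero] at h0
  have h8 : b + 1 + k ≠ 0 := by rwa [add_assoc, add_comm (1:ℂ)]
  have h9 : (ascPochhammer ℂ k).eval (b+1) =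
      (b+1) * (ascPochhammer ℂ k).eval (b+1+1) / (b + 1 + k) := by
    rw [eq_div_iff h8, h7]
  rw [h9]
  field_simp
  ring

lemma kco_rel2 (a b : ℂ) (hb : ∀ k : ℕ, b + k ≠ 0) (k : ℕ) :
    kco a b (k+1) = kco (a+1) b (k+1) - 1 / b * kco (a+1) (b+1) k := by
  have h0 := hb 0
  have h6 := asc_ne_zero (b+1) (hb_succ hb) k
  have h3 : (k.factorial : ℂ) ≠ 0 := by exact_mod_cast k.factorial_ne_zero
  have h4 : (k + 1 : ℂ) ≠ 0 := by exact_mod_cast k.succ_ne_zero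
  unfold kco
  rw [asc_succ_left a, asc_succ_left b, ascPochhammer_succ_eval k (a+1), Nat.factorial_succ]
  push_cast at *
  simp only [add_zero] at h0
  field_simp
  ring

lemma kummer_rel1 (a b : ℂ) (hb : ∀ k : ℕ, b + k ≠ 0) (z : ℂ) :
    kummerM a b z = kummerM a (b+1) z + a / (b * (b+1)) * (z * kummerM (a+1) (b+1+1) z) := by
  have e1 := (hasSum_nat_add_iff' (f := fun k : ℕ => kco a b k * z ^ k) 1).2 (kummer_hasSum a b hb z)
  have e2 := (hasSum_nat_add_iff' (f := fun k : ℕ => kco a (b+1) k * z ^ k) 1).2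
    (kummer_hasSum a (b+1) (hb_succ hb) z)
  have e3 := ((kummer_hasSum (a+1) (b+1+1) (hb_succ (hb_succ hb)) z).mul_left z).mul_left (a / (b * (b+1)))
  have e4 := e2.add e3
  have : (fun k : ℕ => kco a b (k+1) * z ^ (k+1)) = fun k : ℕ => kco a (b+1) (k+1) * z ^ (k+1) +
      a / (b * (b+1)) * (z * (kco (a+1) (b+1+1) k * z ^ k)) := by
    funext k; rw [kco_rel1 a b hb]; ring
  rw [this] at e1
  have := e1.unique e4
  simp [kco] at this
  linear_combination this

lemma kummer_rel2 (a b : ℂ) (hb : ∀ k : ℕ, b + k ≠ 0) (z : ℂ) :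
    kummerM a b z = kummerM (a+1) b z - 1 / b * (z * kummerM (a+1) (b+1) z) := by
  have e1 := (hasSum_nat_add_iff' (f := fun k : ℕ => kco a b k * z ^ k) 1).2 (kummer_hasSum a b hb z)
  have e2 := (hasSum_nat_add_iff' (f := fun k : ℕ => kco (a+1) b k * z ^ k) 1).2
    (kummer_hasSum (a+1) b hb z)
  have e3 := ((kummer_hasSum (a+1) (b+1) (hb_succ hb) z).mul_left z).mul_left (1 / b)
  have e4 := e2.sub e3
  have : (fun k : ℕ => kco a b (k+1) * z ^ (k+1)) = fun k : ℕ => kco (a+1) b (k+1) * z ^ (k+1) -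
      1 / b * (z * (kco (a+1) (b+1) k * z ^ k)) := by
    funext k; rw [kco_rel2 a b hb]; ring
  rw [this] at e1
  have := e1.unique e4
  simp only [range_one, sum_singleton] at this
  simp [kco] at this ⊢
  linear_combination this

lemma kummer_differentiable (a b : ℂ) (hb : ∀ k : ℕ, b + k ≠ 0) :
    Differentiable ℂ (fun z => kummerM a b z) := by
  intro z
  have hd : DifferentiableOn ℂ (fun w : ℂ => ∑' k : ℕ, kco a b k * w ^ k)
      (Metric.ball 0 (‖z‖ + 1)) := by
    refine Complex.differentiableOn_tsum_of_summable_norm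
      (kterm_summable a b hb ((‖z‖ + 1 : ℝ) : ℂ)) (fun k => by fun_prop) Metric.isOpen_ball ?_
    intro k w hw
    have hw' : ‖w‖ < ‖z‖ + 1 := by simpa using hw
    rw [norm_mul, norm_mul, norm_pow, norm_pow]
    gcongr
    rw [Complex.norm_real, Real.norm_of_nonneg (by positivity)]
    exact hw'.le
  exact hd.differentiableAt (Metric.isOpen_ball.mem_nhds (by simp))

/-- Taylor remainder -/
lemma kummer_taylor (a b : ℂ) (hb : ∀ k : ℕ, b + k ≠ 0) (N : ℕ) :
    ∃ C : ℝ, ∀ z : ℂ, ‖z‖ ≤ 1 →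
      ‖kummerM a b z - ∑ k ∈ Finset.range N, kco a b k * z ^ k‖ ≤ C * ‖z‖ ^ N := by
  have hs := (summable_nat_add_iff N).2 (kterm_summable a b hb 1)
  refine ⟨∑' k, ‖kco a b (k+N) * 1 ^ (k + N)‖, fun z hz => ?_⟩
  have e1 := (hasSum_nat_add_iff' (f := fun k : ℕ => kco a b k * z ^ k) N).2 (kummer_hasSum a b hb z)
  rw [← e1.tsum_eq, ← tsum_mul_right]
  refine tsum_of_norm_bounded (hs.mul_right (‖z‖ ^ N)).hasSum fun k => ?_
  simp only [one_pow, mul_one]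
  rw [norm_mul, norm_pow, pow_add]
  gcongr
  exact mul_le_of_le_one_left (by positivity) (pow_le_one₀ (norm_nonneg _) hz)

lemma beta_shift (a b : ℝ) (ha : 0 < a) (hab : a < b) (k : ℕ) :
    Complex.betaIntegral ((a:ℂ) + k) ((b:ℂ) - a) =
      Complex.betaIntegral a ((b:ℂ) - a) *
        ((ascPochhammer ℂ k).eval (a:ℂ) / (ascPochhammer ℂ k).eval (b:ℂ)) := by
  have hb : 0 < b := ha.trans hab
  have hr : ((b:ℂ) - a).re = b - a := by simp
  have hrp : 0 < ((b:ℂ) - a).re := by rw [hr]; linarith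
  have gne : ∀ x : ℝ, 0 < x → Complex.Gamma (x:ℂ) ≠ 0 := fun x hx =>
    Complex.Gamma_ne_zero_of_re_pos (by simpa using hx)
  have hg : ∀ x : ℝ, 0 < x → Complex.Gamma ((x:ℂ) + k) =
      (ascPochhammer ℂ k).eval (x:ℂ) * Complex.Gamma x := by
    intro x hx
    rw [← Complex.Gamma_add_nat_div_Gamma_eq]
    · rw [div_mul_cancel₀ _ (gne x hx)]
    · intro m h
      have h' := congrArg Complex.re h
      simp at h'
      have : (0:ℝ) ≤ m := Nat.cast_nonneg m
      linarith
  rw [Complex.betaIntegral_eq_Gamma_mul_div _ _ (by simp; positivity) hrp,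
    Complex.betaIntegral_eq_Gamma_mul_div _ _ (by simpa using ha) hrp]
  have e1 : (a:ℂ) + k + (b - a) = b + k := by ring
  have e2 : (a:ℂ) + (b - a) = b := by ring
  rw [e1, e2, hg a ha, hg b hb]
  have h1 : (ascPochhammer ℂ k).eval (b:ℂ) ≠ 0 := by
    apply asc_ne_zero
    intro k h
    have h' := congrArg Complex.re h
    simp at h'
    have : (0:ℝ) ≤ k := Nat.cast_nonneg k
    linarith
  have h2 := gne b hb
  field_simp

lemma kummer_base (a b : ℝ) (ha : 0 < a) (hab : a < b) (z : ℂ) :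
    ‖kummerM a b z‖ ≤ max 1 (Real.exp z.re) := by
  have hb : 0 < b := ha.trans hab
  have hrp : 0 < ((b:ℂ) - a).re := by simp; linarith
  set B := Complex.betaIntegral a ((b:ℂ) - a) with hB
  set w : ℝ → ℂ := fun x => (x : ℂ) ^ ((a:ℂ) - 1) * (1 - (x : ℂ)) ^ (((b:ℂ) - a) - 1) with hw
  have hwint : IntervalIntegrable w volume 0 1 :=
    Complex.betaIntegral_convergent (by simpa using ha) hrp
  have hBne : B ≠ 0 := by
    rw [hB, Complex.betaIntegral_eq_Gamma_mul_div _ _ (by simpa using ha) hrp]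
    have e2 : (a:ℂ) + (b - a) = b := by ring
    rw [e2]
    refine div_ne_zero (mul_ne_zero ?_ ?_) ?_
    · exact Complex.Gamma_ne_zero_of_re_pos (by simpa using ha)
    · exact Complex.Gamma_ne_zero_of_re_pos hrp
    · exact Complex.Gamma_ne_zero_of_re_pos (by simpa using hb)
  have hwnorm : ∀ x : ℝ, x ∈ Ioc (0:ℝ) 1 → ((‖w x‖ : ℝ) : ℂ) = w x := by
    intro x hx
    have e1 : (x : ℂ) ^ ((a:ℂ) - 1) = ((x ^ (a - 1) : ℝ) : ℂ) := by
      rw [Complex.ofReal_cpow hx.1.le]; push_cast; rfl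
    have e2 : (1 - (x : ℂ)) ^ (((b:ℂ) - a) - 1) = (((1 - x) ^ (b - a - 1) : ℝ) : ℂ) := by
      rw [Complex.ofReal_cpow (by linarith [hx.2])]; push_cast; rfl
    have : w x = ((x ^ (a - 1) * (1 - x) ^ (b - a - 1) : ℝ) : ℂ) := by
      rw [hw]; simp only; rw [e1, e2]; push_cast; rfl
    rw [this, Complex.norm_real, Real.norm_of_nonneg]
    have : 0 ≤ 1 - x := by linarith [hx.2]
    have := hx.1
    positivity
  have hBeq : ((∫ x in (0:ℝ)..1, ‖w x‖ : ℝ) : ℂ) = B := by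
    rw [← intervalIntegral.integral_ofReal, hB, Complex.betaIntegral]
    apply intervalIntegral.integral_congr_ae
    refine Eventually.of_forall fun x hx => ?_
    rw [uIoc_of_le zero_le_one] at hx
    exact hwnorm x hx
  have hsum : HasSum (fun k : ℕ => ∫ x in (0:ℝ)..1, ((k.factorial : ℂ)⁻¹ * (z * x) ^ k) * w x)
      (∫ x in (0:ℝ)..1, Complex.exp (z * x) * w x) := by
    have hwm : AEStronglyMeasurable w (volume.restrict (Set.uIoc (0:ℝ) 1)) :=
      (intervalIntegrable_iff.1 hwint).aestronglyMeasurable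
    apply intervalIntegral.hasSum_integral_of_dominated_convergence
      (fun k x => ((k.factorial : ℝ)⁻¹ * ‖z‖ ^ k) * ‖w x‖)
    · intro n
      exact AEStronglyMeasurable.mul (Continuous.aestronglyMeasurable (by fun_prop)) hwm
    · intro n
      refine Eventually.of_forall fun x hx => ?_
      rw [uIoc_of_le zero_le_one] at hx
      rw [norm_mul, norm_mul, norm_pow, norm_mul, norm_inv, Complex.norm_natCast,
        Complex.norm_real, Real.norm_of_nonneg hx.1.le]
      have hx0 := hx.1.le
      have := mul_le_of_le_one_right (norm_nonneg z) hx.2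
      gcongr
    · refine Eventually.of_forall fun x hx => ?_
      have := (Real.summable_pow_div_factorial ‖z‖).mul_right ‖w x‖
      refine this.congr fun k => ?_
      rw [div_eq_inv_mul]
    · simp only [tsum_mul_right]
      exact hwint.norm.const_mul _
    · refine Eventually.of_forall fun x hx => ?_
      refine HasSum.mul_right _ ?_
      have := NormedSpace.expSeries_div_hasSum_exp (𝔸 := ℂ) (z * x)
      rw [← Complex.exp_eq_exp_ℂ] at this
      refine this.congr_fun ?_ |> fun h => h
      intro k
      rw [div_eq_inv_mul]
  have hM : HasSum (fun k : ℕ => ∫ x in (0:ℝ)..1, ((k.factorial : ℂ)⁻¹ * (z * x) ^ k) * w x)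
      (B * kummerM a b z) := by
    have hbb : ∀ k : ℕ, (b:ℂ) + k ≠ 0 := by
      intro k h
      have h' := congrArg Complex.re h
      simp at h'
      have : (0:ℝ) ≤ k := Nat.cast_nonneg k
      linarith
    have := (kummer_hasSum a b hbb z).mul_left B
    refine this.congr_fun ?_ |> fun h => h
    intro k
    have e1 : B * (kco a b k * z ^ k) =
        (k.factorial : ℂ)⁻¹ * z ^ k * Complex.betaIntegral ((a:ℂ) + k) ((b:ℂ) - a) := by
      rw [beta_shift a b ha hab, kco]
      have := asc_ne_zero (b:ℂ) hbb k
      have h3 : (k.factorial : ℂ) ≠ 0 := by exact_mod_cast k.factorial_ne_zero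
      rw [hB]
      field_simp
    rw [e1, Complex.betaIntegral, ← intervalIntegral.integral_const_mul]
    apply intervalIntegral.integral_congr_ae
    refine Eventually.of_forall fun x hx => ?_
    rw [uIoc_of_le zero_le_one] at hx
    have hx0 : (x:ℂ) ≠ 0 := by exact_mod_cast hx.1.ne'
    have : (x:ℂ) ^ ((a:ℂ) + k - 1) = (x:ℂ) ^ ((a:ℂ) - 1) * (x:ℂ) ^ k := by
      rw [← Complex.cpow_natCast, ← Complex.cpow_add _ _ hx0]; congr 1; ring
    rw [this, mul_pow, hw]
    ring
  have heq := hM.unique hsum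
  have hbound : ‖B * kummerM a b z‖ ≤ max 1 (Real.exp z.re) * ‖B‖ := by
    rw [heq]
    have hBn : ‖B‖ = ∫ x in (0:ℝ)..1, ‖w x‖ := by
      rw [← hBeq, Complex.norm_real, Real.norm_of_nonneg]
      exact intervalIntegral.integral_nonneg zero_le_one fun x _ => norm_nonneg _
    rw [hBn, ← intervalIntegral.integral_const_mul]
    refine intervalIntegral.norm_integral_le_of_norm_le zero_le_one ?_ (hwint.norm.const_mul _)
    refine Eventually.of_forall fun x hx => ?_
    rw [norm_mul, Complex.norm_exp]
    gcongr
    simp only [Complex.mul_re, Complex.ofReal_re, Complex.ofReal_im, mul_zero, sub_zero]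
    rcases le_total z.re 0 with h | h
    · refine le_max_of_le_left ?_
      rw [Real.exp_le_one_iff]
      exact mul_nonpos_of_nonpos_of_nonneg h hx.1.le
    · refine le_max_of_le_right ?_
      rw [Real.exp_le_exp]
      exact mul_le_of_le_one_right h hx.2
  rw [norm_mul, mul_comm] at hbound
  exact le_of_mul_le_mul_right hbound (norm_pos_iff.2 hBne)

/-- polynomial growth in left half planes -/
def KB (a b : ℝ) : Prop := ∃ C : ℝ, ∃ K : ℕ, 0 ≤ C ∧
  ∀ z : ℂ, ‖kummerM a b z‖ ≤ C * (1 + ‖z‖) ^ K * max 1 (Real.exp z.re)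

lemma KB_comb {M1 M2 M3 : ℂ → ℂ} (d : ℂ) 
    (h1 : ∃ C : ℝ, ∃ K : ℕ, 0 ≤ C ∧ ∀ z : ℂ, ‖M1 z‖ ≤ C * (1 + ‖z‖) ^ K * max 1 (Real.exp z.re))
    (h2 : ∃ C : ℝ, ∃ K : ℕ, 0 ≤ C ∧ ∀ z : ℂ, ‖M2 z‖ ≤ C * (1 + ‖z‖) ^ K * max 1 (Real.exp z.re))
    (h : ∀ z, M3 z = M1 z + d * (z * M2 z)) :
    ∃ C : ℝ, ∃ K : ℕ, 0 ≤ C ∧ ∀ z : ℂ, ‖M3 z‖ ≤ C * (1 + ‖z‖) ^ K * max 1 (Real.exp z.re) := by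
  obtain ⟨C1, K1, hC1, h1⟩ := h1
  obtain ⟨C2, K2, hC2, h2⟩ := h2
  refine ⟨C1 + ‖d‖ * C2, K1 + (K2 + 1), by positivity, fun z => ?_⟩
  rw [h]
  have hz : 1 ≤ 1 + ‖z‖ := by linarith [norm_nonneg z]
  have p1 : (1 + ‖z‖) ^ K1 ≤ (1 + ‖z‖) ^ (K1 + (K2 + 1)) := pow_le_pow_right₀ hz (by omega)
  have p2 : (1 + ‖z‖) ^ (K2+1) ≤ (1 + ‖z‖) ^ (K1 + (K2 + 1)) := pow_le_pow_right₀ hz (by omega)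
  calc ‖M1 z + d * (z * M2 z)‖ ≤ ‖M1 z‖ + ‖d‖ * (‖z‖ * ‖M2 z‖) := by
        refine (norm_add_le _ _).trans ?_
        rw [norm_mul, norm_mul]
    _ ≤ C1 * (1 + ‖z‖) ^ K1 * max 1 (Real.exp z.re) +
        ‖d‖ * ((1 + ‖z‖) * (C2 * (1 + ‖z‖) ^ K2 * max 1 (Real.exp z.re))) := by
        gcongr
        · exact h1 z
        · linarith
        · exact h2 z
    _ = C1 * (1 + ‖z‖) ^ K1 * max 1 (Real.exp z.re) +
        ‖d‖ * C2 * (1 + ‖z‖) ^ (K2 + 1) * max 1 (Real.exp z.re) := by ring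
    _ ≤ C1 * (1 + ‖z‖) ^ (K1 + (K2 + 1)) * max 1 (Real.exp z.re) +
        ‖d‖ * C2 * (1 + ‖z‖) ^ (K1 + (K2 + 1)) * max 1 (Real.exp z.re) := by gcongr
    _ = _ := by ring

lemma hbC {b : ℝ} (hb : ∀ k : ℕ, b + k ≠ 0) : ∀ k : ℕ, (b : ℂ) + k ≠ 0 := by
  intro k; exact_mod_cast hb k

lemma KB_pos (n : ℕ) : ∀ a b : ℝ, 0 < a → (∀ k : ℕ, b + k ≠ 0) → a < b + n → KB a b := by
  induction n with
  | zero =>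
    intro a b ha hb hab
    refine ⟨1, 0, zero_le_one, fun z => ?_⟩
    simpa using kummer_base a b ha (by simpa using hab) z
  | succ n ih =>
    intro a b ha hb hab
    push_cast at hab
    have hb1 : ∀ k : ℕ, b + 1 + k ≠ 0 := by
      intro k; have := hb (k+1); push_cast at this; rwa [add_assoc, add_comm (1:ℝ)]
    have hb2 : ∀ k : ℕ, b + 1 + 1 + k ≠ 0 := by
      intro k; have := hb1 (k+1); push_cast at this; rwa [add_assoc, add_comm (1:ℝ)]
    have i1 := ih a (b+1) ha hb1 (by linarith)
    have i2 := ih (a+1) (b+1+1) (by linarith) hb2 (by linarith)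
    refine KB_comb ((a:ℂ) / (b * (b+1))) i1 i2 fun z => ?_
    have := kummer_rel1 a b (hbC hb) z
    push_cast
    exact this

lemma KB_half (b : ℝ) (hb : ∀ k : ℕ, b + k ≠ 0) : KB (-1/2) b := by
  have hb1 : ∀ k : ℕ, b + 1 + k ≠ 0 := by
    intro k; have := hb (k+1); push_cast at this; rwa [add_assoc, add_comm (1:ℝ)]
  obtain ⟨n, hn⟩ := exists_nat_gt (1/2 - b)
  have i1 := KB_pos n (-1/2+1) b (by norm_num) hb (by linarith)
  have i2 := KB_pos n (-1/2+1) (b+1) (by norm_num) hb1 (by linarith)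
  refine KB_comb (-(1 / (b:ℂ))) i1 i2 fun z => ?_
  have := kummer_rel2 ((-1/2:ℝ):ℂ) b (hbC hb) z
  push_cast at *
  rw [this]; ring

/-- The form used for f2 -/
lemma kummer_bound (q : ℝ) (hq : 0 ≤ q) (hhalf : ∀ k : ℕ, q ≠ (k : ℝ) + 1 / 2) :
    ∃ C : ℝ, ∃ K : ℕ, 0 ≤ C ∧ ∀ z : ℂ, ‖kummerM (-1/2) (-(q:ℂ) - 1/2) z‖ ≤
      C * (1 + ‖z‖) ^ K * max 1 (Real.exp z.re) := by
  have := KB_half (-q - 1/2) (by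
    intro k h
    rcases k with _ | k
    · simp at h; linarith
    · apply hhalf k; push_cast at h; linarith)
  unfold KB at this
  push_cast at this
  exact this

lemma hb_q (q : ℝ) (hq : 0 ≤ q) (hhalf : ∀ k : ℕ, q ≠ (k : ℝ) + 1 / 2) :
    ∀ k : ℕ, (-(q:ℂ) - 1/2) + k ≠ 0 := by
  have := hbC (b := -q - 1/2) (by
    intro k h
    rcases k with _ | k
    · simp at h; linarith
    · apply hhalf k; push_cast at h; linarith)
  push_cast at this
  exact this

lemma small_mem_compl {z : ℂ} (h0 : z ≠ 0) (h1 : ‖z‖ < 1) : z ∈ Complex.integerComplement := by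
  rw [Complex.mem_integerComplement_iff]
  rintro ⟨n, rfl⟩
  rw [Complex.norm_intCast] at h1
  have h2 : |n| < 1 := by exact_mod_cast h1
  rw [Int.abs_lt_one_iff] at h2
  exact h0 (by simp [h2])

lemma zeta_hasSum (k : ℕ) :
    HasSum (fun n : ℕ => 1 / ((n : ℂ) + 1) ^ (2 * k + 2)) (riemannZeta (2 * ((k + 1 : ℕ) : ℂ))) := by
  have h := zeta_nat_eq_tsum_of_gt_one (k := 2 * k + 2) (by omega)
  have hs : Summable (fun n : ℕ => 1 / (n : ℂ) ^ (2 * k + 2)) := by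
    have := Real.summable_one_div_nat_pow (p := 2 * k + 2) |>.2 (by omega)
    refine Summable.of_norm ?_
    simpa using this
  have e : (2 * ((k + 1 : ℕ) : ℂ)) = ((2 * k + 2 : ℕ) : ℂ) := by push_cast; ring
  rw [e, h]
  have := (hasSum_nat_add_iff' 1).2 hs.hasSum
  simpa using this

lemma cot_expand (K : ℕ) : ∃ C : ℝ, ∀ z : ℂ, z ≠ 0 → ‖z‖ ≤ 1/2 →
    ‖(π * z * Complex.cot (π * z) - 1) -
      ∑ k ∈ Finset.range K, (-2 * riemannZeta (2 * ((k + 1 : ℕ) : ℂ)) * z ^ (2 * k + 2))‖ ≤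
      C * ‖z‖ ^ (2 * K + 2) := by
  have hs2 : Summable (fun n : ℕ => 8/3 * (1 / ((n : ℝ) + 1) ^ 2)) := by
    have := (summable_nat_add_iff 1).2 (Real.summable_one_div_nat_pow (p := 2) |>.2 (by omega))
    refine Summable.mul_left _ ?_
    simpa using this
  refine ⟨∑' n : ℕ, 8/3 * (1 / ((n : ℝ) + 1) ^ 2), fun z hz0 hz => ?_⟩
  have hzc := small_mem_compl hz0 (by linarith)
  have h1 : HasSum (fun n : ℕ => z * cotTerm z n) (π * z * Complex.cot (π * z) - 1) := by
    have := ((summable_cotTerm hzc).hasSum).mul_left z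
    have e := cot_series_rep' hzc
    rw [← e] at this
    have e2 : π * z * Complex.cot (π * z) - 1 = z * (π * Complex.cot (π * z) - 1 / z) := by
      rw [mul_sub, mul_one_div_cancel hz0]; ring
    rw [e2]
    exact this
  have h2 : HasSum (fun n : ℕ => ∑ k ∈ Finset.range K,
      (-2 * (1 / ((n : ℂ) + 1) ^ (2 * k + 2)) * z ^ (2 * k + 2)))
      (∑ k ∈ Finset.range K, (-2 * riemannZeta (2 * ((k + 1 : ℕ) : ℂ)) * z ^ (2 * k + 2))) :=
    hasSum_sum fun k _ => ((zeta_hasSum k).mul_left (-2)).mul_right _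
  have h3 := h1.sub h2
  rw [← h3.tsum_eq, ← tsum_mul_right]
  refine tsum_of_norm_bounded (hs2.mul_right _).hasSum fun n => ?_
  have hm1 : (1:ℝ) ≤ (n:ℝ) + 1 := by linarith [(Nat.cast_nonneg n : (0:ℝ) ≤ n)]
  have hm0 : ((n : ℂ) + 1) ≠ 0 := by exact_mod_cast n.succ_ne_zero
  have hnm : ‖(n : ℂ) + 1‖ = (n:ℝ) + 1 := by
    have : (n : ℂ) + 1 = ((n + 1 : ℕ) : ℂ) := by push_cast; rfl
    rw [this, Complex.norm_natCast]; push_cast; rfl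
  set m : ℂ := (n : ℂ) + 1 with hm
  have hlow : 3/4 * ((n:ℝ) + 1) ^ 2 ≤ ‖m ^ 2 - z ^ 2‖ := by
    have := norm_sub_norm_le (m ^ 2) (z ^ 2)
    rw [norm_pow, norm_pow, hnm] at this
    have hz2 : ‖z‖ ^ 2 ≤ 1/4 := by nlinarith [norm_nonneg z]
    nlinarith
  have hne : m ^ 2 - z ^ 2 ≠ 0 := by
    intro h; rw [h, norm_zero] at hlow; nlinarith
  have hgeo : ∀ K : ℕ, z * cotTerm z n - ∑ k ∈ Finset.range K,
      (-2 * (1 / m ^ (2 * k + 2)) * z ^ (2 * k + 2)) =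
      -2 * z ^ (2 * K + 2) / (m ^ (2 * K) * (m ^ 2 - z ^ 2)) := by
    intro K
    induction K with
    | zero =>
      rw [cotTerm_identity hzc, ← hm]
      have : (z + m) * (z - m) = -(m ^ 2 - z ^ 2) := by ring
      rw [this, Finset.sum_range_zero]
      generalize m ^ 2 - z ^ 2 = D
      rw [one_div, inv_neg]
      ring
    | succ K ih =>
      rw [Finset.sum_range_succ, ← sub_sub, ih]
      field_simp
      ring
  rw [hgeo, norm_div, norm_mul, norm_mul, norm_pow, norm_pow, hnm, norm_neg, Complex.norm_ofNat]
  have hmp : (1:ℝ) ≤ ((n:ℝ) + 1) ^ (2 * K) := one_le_pow₀ hm1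
  calc 2 * ‖z‖ ^ (2 * K + 2) / (((n:ℝ) + 1) ^ (2 * K) * ‖m ^ 2 - z ^ 2‖)
      ≤ 2 * ‖z‖ ^ (2 * K + 2) / (1 * (3/4 * ((n:ℝ) + 1) ^ 2)) := by gcongr
    _ = _ := by field_simp; norm_num

lemma csc_expand (K : ℕ) : ∃ C : ℝ, ∀ s : ℂ, s ≠ 0 → ‖s‖ ≤ 1/2 →
    ‖(π : ℂ) * s / Complex.sin ((π : ℂ) * s) -
      ∑ j ∈ Finset.range (K + 1), tau2 j * s ^ (2 * j)‖ ≤ C * ‖s‖ ^ (2 * K + 2) := by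
  obtain ⟨C, hC⟩ := cot_expand K
  have hC0 : 0 ≤ C := by
    have := (norm_nonneg _).trans (hC (1/2) (by norm_num) (by norm_num))
    exact nonneg_of_mul_nonneg_left this (pow_pos (by norm_num) _)
  refine ⟨2 * C + C, fun s hs0 hs => ?_⟩
  have h1 := hC s hs0 hs
  have hs2 : ‖s / 2‖ = ‖s‖ / 2 := by simp
  have h2 := hC (s/2) (by simpa using hs0) (by rw [hs2]; linarith [norm_nonneg s])
  have hsin : Complex.sin (π * s) ≠ 0 :=
    sin_pi_mul_ne_zero (small_mem_compl hs0 (by linarith))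
  have hx : (π : ℂ) * s = 2 * (π * (s / 2)) := by ring
  have key : (π : ℂ) * s / Complex.sin ((π : ℂ) * s) =
      2 * (π * (s/2) * Complex.cot (π * (s/2))) - π * s * Complex.cot (π * s) := by
    rw [Complex.cot_eq_cos_div_sin, Complex.cot_eq_cos_div_sin]
    rw [hx] at hsin ⊢
    set x := (π : ℂ) * (s / 2)
    rw [Complex.sin_two_mul] at hsin ⊢
    rw [Complex.cos_two_mul]
    have hsx : Complex.sin x ≠ 0 := by intro h; simp [h] at hsin
    have hcx : Complex.cos x ≠ 0 := by intro h; simp [h] at hsin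
    field_simp
    ring
  have hsum : ∑ j ∈ Finset.range (K + 1), tau2 j * s ^ (2 * j) =
      1 + 2 * ∑ k ∈ Finset.range K, (-2 * riemannZeta (2 * ((k + 1 : ℕ) : ℂ)) * (s/2) ^ (2 * k + 2))
      - ∑ k ∈ Finset.range K, (-2 * riemannZeta (2 * ((k + 1 : ℕ) : ℂ)) * s ^ (2 * k + 2)) := by
    rw [Finset.sum_range_succ', Finset.mul_sum, add_sub_assoc, ← Finset.sum_sub_distrib, add_comm]
    congr 1
    · simp [tau2]
    · refine Finset.sum_congr rfl fun k _ => ?_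
      have hz : (2:ℂ) ^ (1 - 2 * ((k+1 : ℕ) : ℤ)) = 2 / 2 ^ (2 * k + 2) := by
        rw [zpow_sub₀ two_ne_zero, zpow_one]
        congr 1
      rw [tau2, if_neg (Nat.succ_ne_zero k), hz, div_pow]
      have : 2 * (k + 1) = 2 * k + 2 := by ring
      rw [this]
      field_simp
      ring
  rw [key, hsum]
  have hh : ‖s / 2‖ ^ (2 * K + 2) ≤ ‖s‖ ^ (2 * K + 2) := by
    rw [hs2]; gcongr; linarith [norm_nonneg s]
  set A := π * (s/2) * Complex.cot (π * (s/2))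
  set B := π * s * Complex.cot (π * s)
  set SA := ∑ k ∈ Finset.range K, (-2 * riemannZeta (2 * ((k + 1 : ℕ) : ℂ)) * (s/2) ^ (2 * k + 2))
  set SB := ∑ k ∈ Finset.range K, (-2 * riemannZeta (2 * ((k + 1 : ℕ) : ℂ)) * s ^ (2 * k + 2))
  have e : 2 * A - B - (1 + 2 * SA - SB) = 2 * (A - 1 - SA) - (B - 1 - SB) := by ring
  rw [e]
  calc _ ≤ ‖2 * (A - 1 - SA)‖ + ‖B - 1 - SB‖ := norm_sub_le _ _
    _ ≤ 2 * (C * ‖s‖ ^ (2 * K + 2)) + C * ‖s‖ ^ (2 * K + 2) := by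
      rw [norm_mul, Complex.norm_ofNat]
      gcongr
      exact h2.trans (by gcongr)
    _ = _ := by ring

lemma f2_taylor (q β : ℝ) (hβ : 0 < β) (hb : ∀ k : ℕ, (-(q:ℂ) - 1/2) + k ≠ 0) (N : ℕ) :
    (fun s : ℂ => f2 q β s - ∑ n ∈ Finset.range N, acoef q β n * s ^ n) =O[nhdsWithin 0 {0}ᶜ]
      (fun s : ℂ => s ^ N) := by
  set l : Filter ℂ := nhdsWithin 0 {0}ᶜ with hl
  set mc : ℕ → ℂ := fun k => kco (-1/2) (-(q:ℂ) - 1/2) k * (2 / β) ^ k with hmc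
  set PA : Polynomial ℂ := ∑ j ∈ Finset.range (N+1), Polynomial.C (tau2 j) * Polynomial.X ^ (2 * j) with hPA
  set PB : Polynomial ℂ := ∑ k ∈ Finset.range N, Polynomial.C (mc k) * Polynomial.X ^ k with hPB
  set R : Polynomial ℂ := ∑ k ∈ Finset.range N, Polynomial.C (acoef q β k) * Polynomial.X ^ k with hR
  set B : ℂ → ℂ := fun s => kummerM (-1 / 2) (-(q : ℂ) - 1 / 2) (2 * s / (β : ℂ)) with hB
  have hnear : ∀ ε : ℝ, 0 < ε → ∀ᶠ s in l, s ≠ 0 ∧ ‖s‖ < ε := by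
    intro ε hε
    filter_upwards [self_mem_nhdsWithin, nhdsWithin_le_nhds (Metric.ball_mem_nhds (0:ℂ) hε)] with s h1 h2
    exact ⟨h1, by simpa using h2⟩
  have hA : (fun s : ℂ => (π : ℂ) * s / Complex.sin ((π : ℂ) * s) - PA.eval s) =O[l] (fun s => s ^ N) := by
    obtain ⟨C, hC⟩ := csc_expand N
    refine IsBigO.of_bound |C| ?_
    filter_upwards [hnear (1/2) (by norm_num)] with s hs
    have := hC s hs.1 hs.2.le
    have e : PA.eval s = ∑ j ∈ Finset.range (N + 1), tau2 j * s ^ (2 * j) := by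
      simp [hPA, Polynomial.eval_finsetSum]
    rw [e]
    refine this.trans ?_
    rw [norm_pow]
    have h1 : ‖s‖ ^ (2 * N + 2) ≤ ‖s‖ ^ N :=
      pow_le_pow_of_le_one (norm_nonneg _) (by linarith [hs.2]) (by omega)
    gcongr
    exact le_abs_self C
  have hBt : (fun s : ℂ => B s - PB.eval s) =O[l] (fun s => s ^ N) := by
    obtain ⟨C, hC⟩ := kummer_taylor (-1/2) (-(q:ℂ) - 1/2) hb N
    refine IsBigO.of_bound (C * (2/β) ^ N) ?_
    filter_upwards [hnear (β/2) (by positivity)] with s hs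
    have hn : ‖2 * s / (β:ℂ)‖ = 2 / β * ‖s‖ := by
      rw [norm_div, norm_mul, Complex.norm_real, Real.norm_of_nonneg hβ.le]; simp; ring
    have hle : ‖2 * s / (β:ℂ)‖ ≤ 1 := by
      rw [hn]
      calc 2 / β * ‖s‖ ≤ 2 / β * (β / 2) := by gcongr; exact hs.2.le
        _ = 1 := by field_simp
    have := hC _ hle
    have e : PB.eval s = ∑ k ∈ Finset.range N, kco (-1/2) (-(q:ℂ) - 1/2) k * (2 * s / (β:ℂ)) ^ k := by
      simp only [hPB, Polynomial.eval_finsetSum, Polynomial.eval_mul, Polynomial.eval_C, Polynomial.eval_pow, Polynomial.eval_X, hmc]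
      refine Finset.sum_congr rfl fun k _ => ?_
      rw [mul_assoc, ← mul_pow]; congr 2; ring
    rw [e]
    refine this.trans (le_of_eq ?_)
    rw [hn, norm_pow]; ring
  have hB1 : B =O[l] (fun _ => (1:ℂ)) := by
    have hc : Continuous B := (kummer_differentiable _ _ hb).continuous.comp (by fun_prop)
    exact (hc.continuousAt.tendsto.mono_left nhdsWithin_le_nhds).isBigO_one ℂ
  have hP1 : ∀ P : Polynomial ℂ, (fun s => P.eval s) =O[l] (fun _ => (1:ℂ)) := fun P =>
    (P.continuous.continuousAt.tendsto.mono_left nhdsWithin_le_nhds).isBigO_one ℂ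
  have hdvd : Polynomial.X ^ N ∣ PA * PB - R := by
    rw [Polynomial.X_pow_dvd_iff]
    intro d hd
    have c1 : PB.coeff = fun i => if i < N then mc i else 0 := by
      funext i
      simp [hPB, Polynomial.finsetSum_coeff, Polynomial.coeff_X_pow]
    have c2 : R.coeff d = acoef q β d := by
      simp [hR, Polynomial.finsetSum_coeff, Polynomial.coeff_X_pow, hd]
    rw [Polynomial.coeff_sub, c2, hPA, Finset.sum_mul, Polynomial.finsetSum_coeff, sub_eq_zero]
    simp only [mul_assoc, Polynomial.coeff_C_mul, Polynomial.coeff_X_pow_mul', c1]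
    rw [acoef]
    symm
    refine Finset.sum_subset_zero_on_sdiff ?_ ?_ ?_
    · intro j hj
      simp only [Finset.mem_range] at *
      omega
    · intro j hj
      simp only [Finset.mem_sdiff, Finset.mem_range] at hj
      rw [if_neg (by omega), mul_zero]
    · intro j hj
      simp only [Finset.mem_range] at hj
      rw [if_pos (by omega), if_pos (by omega)]
      simp only [hmc, kco]
      ring
  obtain ⟨Q, hQ⟩ := hdvd
  have hfin : (fun s => (PA * PB - R).eval s) =O[l] (fun s => s ^ N) := by
    rw [hQ]
    simp only [Polynomial.eval_mul, Polynomial.eval_pow, Polynomial.eval_X]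
    simpa using (isBigO_refl (fun s : ℂ => s ^ N) l).mul (hP1 Q)
  have t1 := hA.mul hB1
  have t2 := (hP1 PA).mul hBt
  simp only [mul_one, one_mul] at t1 t2
  refine ((t1.add t2).add hfin).congr_left fun s => ?_
  have e : R.eval s = ∑ n ∈ Finset.range N, acoef q β n * s ^ n := by
    simp [hR, Polynomial.eval_finsetSum]
  rw [← e, f2]
  simp only [Polynomial.eval_mul, Polynomial.eval_sub, hB]
  ring

noncomputable def hfun (q β : ℝ) (s : ℂ) : ℂ := f2 q β s / s ^ ((q : ℂ) + 5 / 2)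

def Om : Set ℂ := {s | s ∈ Complex.slitPlane ∧ s.re < 1}

lemma Om_open : IsOpen Om :=
  Complex.isOpen_slitPlane.inter (isOpen_lt Complex.continuous_re continuous_const)

lemma sin_ne_zero_Om {s : ℂ} (hs : s ∈ Om) : Complex.sin (π * s) ≠ 0 := by
  intro h
  rw [Complex.sin_eq_zero_iff] at h
  obtain ⟨k, hk⟩ := h
  have hpi : (π : ℂ) ≠ 0 := by exact_mod_cast Real.pi_ne_zero
  have hsk : s = k := by
    rw [mul_comm] at hk
    exact mul_right_cancel₀ hpi hk
  obtain ⟨h1, h2⟩ := hs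
  subst hsk
  rw [Complex.mem_slitPlane_iff] at h1
  simp at h1 h2
  have : k < 1 := by exact_mod_cast h2
  omega

lemma hfun_diff (q β : ℝ) (hb : ∀ k : ℕ, (-(q:ℂ) - 1/2) + k ≠ 0) :
    DifferentiableOn ℂ (hfun q β) Om := by
  intro s hs
  have h1 := sin_ne_zero_Om hs
  have h0 : s ≠ 0 := Complex.slitPlane_ne_zero hs.1
  apply DifferentiableAt.differentiableWithinAt
  unfold hfun f2
  have hk : DifferentiableAt ℂ (fun s : ℂ => kummerM (-1 / 2) (-(q : ℂ) - 1 / 2) (2 * s / (β : ℂ))) s :=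
    (kummer_differentiable _ _ hb (2 * s / (β : ℂ))).comp s (f := fun s : ℂ => 2 * s / (β : ℂ)) (by fun_prop)
  refine DifferentiableAt.div (DifferentiableAt.mul (DifferentiableAt.div (by fun_prop) ?_ h1) hk) ?_ ?_
  · exact (Complex.differentiable_sin _).comp s (by fun_prop)
  · exact (differentiableAt_id).cpow_const hs.1
  · rw [Complex.cpow_ne_zero_iff]; exact Or.inl h0

lemma sin_lower (z : ℂ) : Real.exp |z.im| - Real.exp (-|z.im|) ≤ 2 * ‖Complex.sin z‖ := by
  have e : Complex.exp (-z * Complex.I) - Complex.exp (z * Complex.I) =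
      -(2 * Complex.I) * Complex.sin z := by
    have := Complex.two_sin z
    linear_combination (Complex.I) * this + (Complex.exp (-z * Complex.I) - Complex.exp (z * Complex.I)) * Complex.I_sq
  have n1 : ‖Complex.exp (-z * Complex.I)‖ = Real.exp z.im := by rw [Complex.norm_exp]; simp
  have n2 : ‖Complex.exp (z * Complex.I)‖ = Real.exp (-z.im) := by rw [Complex.norm_exp]; simp
  have n3 : ‖-(2 * Complex.I) * Complex.sin z‖ = 2 * ‖Complex.sin z‖ := by simp
  rw [← n3, ← e]
  rcases abs_cases z.im with ⟨h, _⟩ | ⟨h, _⟩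
  · rw [h, ← n1, ← n2]; exact norm_sub_norm_le _ _
  · rw [h, neg_neg, ← n1, ← n2, norm_sub_rev]; exact norm_sub_norm_le _ _

lemma cpow_norm (s : ℂ) (q : ℝ) : ‖s ^ ((q : ℂ) + 5 / 2)‖ = ‖s‖ ^ (q + 5/2) := by
  rw [← Complex.norm_cpow_real]; push_cast; rfl

lemma h_far (q β : ℝ) (hβ : 0 < β) (hq : 0 ≤ q) (hhalf : ∀ k : ℕ, q ≠ (k : ℝ) + 1 / 2)
    (τ : ℝ) (hτ : 0 < τ) :
    ∃ C : ℝ, 0 ≤ C ∧ ∀ s : ℂ, |s.re| ≤ 1 → τ ≤ |s.im| → ‖hfun q β s‖ ≤ C * Real.exp (-|s.im|) := by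
  obtain ⟨C, K, hC, hM⟩ := kummer_bound q hq hhalf
  set d : ℝ := 1 - Real.exp (-(2 * π * τ)) with hd
  have hdpos : 0 < d := by
    rw [hd, sub_pos, Real.exp_lt_one_iff]
    have := Real.pi_pos
    nlinarith [mul_pos this hτ]
  refine ⟨π * 2 / d * C * (1 + 2/β) ^ K * Real.exp (2/β) * ((K+1).factorial * Real.exp 1) * (τ ^ (q + 5/2))⁻¹,
    by have := Real.pi_pos; positivity, fun s hre him => ?_⟩
  set t := |s.im| with ht
  have ht0 : 0 < t := hτ.trans_le him
  have hsn : ‖s‖ ≤ 1 + t := (Complex.norm_le_abs_re_add_abs_im s).trans (by linarith)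
  have hsl : τ ≤ ‖s‖ := him.trans (Complex.abs_im_le_norm s)
  have hs0 : 0 < ‖s‖ := hτ.trans_le hsl
  have hsin : d / 2 * Real.exp (π * t) ≤ ‖Complex.sin (π * s)‖ := by
    have h := sin_lower (π * s)
    have e : |((π : ℂ) * s).im| = π * t := by
      rw [Complex.re_ofReal_mul π s |> fun _ => Complex.im_ofReal_mul π s, abs_mul, abs_of_pos Real.pi_pos]
    rw [e] at h
    have h2 : Real.exp (-(π * t)) ≤ Real.exp (-(2 * π * τ)) * Real.exp (π * t) := by
      rw [← Real.exp_add]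
      apply Real.exp_le_exp.2
      nlinarith [Real.pi_pos]
    rw [hd]
    nlinarith
  have hMb : ‖kummerM (-1 / 2) (-(q : ℂ) - 1 / 2) (2 * s / (β : ℂ))‖ ≤
      C * ((1 + 2/β) ^ K * (1 + t) ^ K) * Real.exp (2/β) := by
    refine (hM _).trans ?_
    have e : (2 * s / (β:ℂ)) = ((2 / β : ℝ) : ℂ) * s := by push_cast; ring
    rw [e, Complex.re_ofReal_mul, norm_mul, Complex.norm_real, Real.norm_of_nonneg (by positivity), ← mul_pow]
    have hb2 : 0 < 2 / β := by positivity
    have p1 : 1 + 2 / β * ‖s‖ ≤ (1 + 2/β) * (1 + t) := by nlinarith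
    have p2 : max 1 (Real.exp (2/β * s.re)) ≤ Real.exp (2/β) := by
      refine max_le (Real.one_le_exp hb2.le) (Real.exp_le_exp.2 ?_)
      nlinarith [(abs_le.1 hre).2]
    gcongr
  have hfac : (1 + t) ^ (K+1) ≤ (K+1).factorial * (Real.exp 1 * Real.exp t) := by
    have := Real.pow_div_factorial_le_exp (1 + t) (by linarith) (K+1)
    rw [div_le_iff₀ (by positivity), Real.exp_add] at this
    linarith
  have hpt : Real.exp (-(π * t)) * Real.exp t ≤ Real.exp (-t) := by
    rw [← Real.exp_add]
    apply Real.exp_le_exp.2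
    nlinarith [Real.pi_gt_three]
  rw [hfun, f2, norm_div, norm_mul, norm_div, norm_mul, cpow_norm, Complex.norm_real,
    Real.norm_of_nonneg Real.pi_pos.le]
  have hpos := Real.pi_pos
  calc π * ‖s‖ / ‖Complex.sin (π * s)‖ * ‖kummerM (-1 / 2) (-(q : ℂ) - 1 / 2) (2 * s / (β : ℂ))‖ / ‖s‖ ^ (q + 5/2)
      ≤ π * (1 + t) / (d / 2 * Real.exp (π * t)) * (C * ((1 + 2/β) ^ K * (1 + t) ^ K) * Real.exp (2/β)) / τ ^ (q + 5/2) := by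
        gcongr
    _ = π * 2 / d * C * (1 + 2/β) ^ K * Real.exp (2/β) * (τ ^ (q + 5/2))⁻¹ * Real.exp (-(π * t)) * (1 + t) ^ (K+1) := by
        rw [Real.exp_neg]; field_simp; ring
    _ ≤ π * 2 / d * C * (1 + 2/β) ^ K * Real.exp (2/β) * (τ ^ (q + 5/2))⁻¹ * Real.exp (-(π * t)) * ((K+1).factorial * (Real.exp 1 * Real.exp t)) := by
        gcongr
    _ = π * 2 / d * C * (1 + 2/β) ^ K * Real.exp (2/β) * (τ ^ (q + 5/2))⁻¹ * ((K+1).factorial * Real.exp 1) * (Real.exp (-(π * t)) * Real.exp t) := by ring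
    _ ≤ π * 2 / d * C * (1 + 2/β) ^ K * Real.exp (2/β) * (τ ^ (q + 5/2))⁻¹ * ((K+1).factorial * Real.exp 1) * Real.exp (-t) := by
        gcongr
    _ = _ := by ring

lemma h_far_deriv (q β : ℝ) (hβ : 0 < β) (hq : 0 ≤ q) (hhalf : ∀ k : ℕ, q ≠ (k : ℝ) + 1 / 2)
    (τ : ℝ) (hτ : 0 < τ) (k : ℕ) :
    ∃ C : ℝ, 0 ≤ C ∧ ∀ s : ℂ, |s.re| ≤ 1/2 → τ ≤ |s.im| →
      ‖iteratedDeriv k (hfun q β) s‖ ≤ C * Real.exp (-|s.im|) := by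
  obtain ⟨C, hC, hb⟩ := h_far q β hβ hq hhalf (τ/2) (by positivity)
  set ρ : ℝ := min (τ/2) (1/4) with hρ
  have hρ0 : 0 < ρ := by positivity
  have hρ1 : ρ ≤ τ/2 := min_le_left _ _
  have hρ2 : ρ ≤ 1/4 := min_le_right _ _
  refine ⟨k.factorial * (C * Real.exp ρ) / ρ ^ k, by positivity, fun s hre him => ?_⟩
  have hin : ∀ z ∈ Metric.closedBall s ρ, |z.re| ≤ 3/4 ∧ |s.im| - ρ ≤ |z.im| := by
    intro z hz
    rw [mem_closedBall_iff_norm] at hz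
    have h1 := (Complex.abs_re_le_norm (z - s)).trans hz
    have h2 := (Complex.abs_im_le_norm (z - s)).trans hz
    rw [Complex.sub_re] at h1
    rw [Complex.sub_im] at h2
    constructor
    · have := abs_add_le (z.re - s.re) s.re
      rw [sub_add_cancel] at this
      linarith
    · have := abs_sub_abs_le_abs_sub s.im z.im
      rw [abs_sub_comm] at this
      linarith
  have hsub : Metric.closedBall s ρ ⊆ Om := by
    intro z hz
    obtain ⟨h1, h2⟩ := hin z hz
    refine ⟨?_, by linarith [(abs_le.1 h1).2]⟩
    rw [Complex.mem_slitPlane_iff]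
    right
    intro h0
    rw [h0, abs_zero] at h2
    linarith
  have hd : DiffContOnCl ℂ (hfun q β) (Metric.ball s ρ) := by
    apply DifferentiableOn.diffContOnCl
    refine (hfun_diff q β (hb_q q hq hhalf)).mono ?_
    exact Metric.closure_ball_subset_closedBall.trans hsub
  have := Complex.norm_iteratedDeriv_le_of_forall_mem_sphere_norm_le k hρ0 hd
    (C := C * Real.exp ρ * Real.exp (-|s.im|)) (by
      intro z hz
      obtain ⟨h1, h2⟩ := hin z (Metric.sphere_subset_closedBall hz)
      refine (hb z (by linarith) (by linarith)).trans ?_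
      rw [mul_assoc, ← Real.exp_add]
      gcongr
      linarith)
  refine this.trans (le_of_eq ?_)
  ring

lemma integrable_of_exp_bound (g : ℝ → ℂ) (hc : Continuous g) (C : ℝ)
    (h : ∀ t, 1 ≤ |t| → ‖g t‖ ≤ C * Real.exp (-|t|)) : Integrable g := by
  obtain ⟨D, hD⟩ := (isCompact_Icc (a := (-1:ℝ)) (b := 1)).exists_bound_of_continuousOn hc.continuousOn
  have hD0 : 0 ≤ D := (norm_nonneg _).trans (hD 0 (by simp))
  refine Integrable.mono' ((integrable_inv_one_add_sq).const_mul (2 * |C| + 2 * D)) hc.aestronglyMeasurable ?_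
  refine Eventually.of_forall fun t => ?_
  rcases le_total 1 |t| with ht | ht
  · refine (h t ht).trans ?_
    have h1 : Real.exp (-|t|) ≤ 2 * (1 + t^2)⁻¹ := by
      rw [Real.exp_neg, ← div_eq_mul_inv, inv_eq_one_div, div_le_div_iff₀ (Real.exp_pos _) (by positivity)]
      have := Real.quadratic_le_exp_of_nonneg (abs_nonneg t)
      rw [sq_abs] at this
      nlinarith [abs_nonneg t]
    calc C * Real.exp (-|t|) ≤ |C| * (2 * (1 + t^2)⁻¹) := by
          gcongr; exact le_abs_self C
      _ ≤ _ := by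
        have : 0 ≤ D * (1 + t^2)⁻¹ := by positivity
        nlinarith
  · refine (hD t (abs_le.1 ht)).trans ?_
    have h1 : 1 ≤ 2 * (1 + t^2)⁻¹ := by
      rw [← div_eq_mul_inv, le_div_iff₀ (by positivity)]
      have : t^2 ≤ 1 := by rw [← sq_abs]; nlinarith [abs_nonneg t]
      linarith
    have : 0 ≤ |C| * (1 + t^2)⁻¹ := by positivity
    nlinarith

lemma shift_line (G : ℂ → ℂ) (hG : DifferentiableOn ℂ G Om) (C σ₁ σ₂ : ℝ) (h1 : 0 < σ₁) (h1' : σ₁ < 1)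
    (h2 : 0 < σ₂) (h2' : σ₂ < 1)
    (hb : ∀ s : ℂ, 0 < s.re → s.re < 1 → 1 ≤ |s.im| → ‖G s‖ ≤ C * Real.exp (-|s.im|)) :
    ∫ t : ℝ, G (σ₁ + t * Complex.I) = ∫ t : ℝ, G (σ₂ + t * Complex.I) := by
  have hmem : ∀ σ : ℝ, 0 < σ → σ < 1 → ∀ t : ℝ, ((σ:ℂ) + t * Complex.I) ∈ Om := by
    intro σ a b t
    refine ⟨?_, by simpa using b⟩
    rw [Complex.mem_slitPlane_iff]; left; simpa using a
  have hIntg : ∀ σ : ℝ, 0 < σ → σ < 1 → Integrable (fun t : ℝ => G (σ + t * Complex.I)) := by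
    intro σ a b
    apply integrable_of_exp_bound _ _ C
    · intro t ht
      have := hb (σ + t * Complex.I) (by simpa using a) (by simpa using b) (by simpa using ht)
      simpa using this
    · exact hG.continuousOn.comp_continuous (by fun_prop) (hmem σ a b)
  have hrect : ∀ T : ℝ, (∫ x : ℝ in σ₁..σ₂, G (x + (-T : ℝ) * Complex.I)) -
      (∫ x : ℝ in σ₁..σ₂, G (x + T * Complex.I)) +
      Complex.I • (∫ y : ℝ in (-T)..T, G (σ₂ + y * Complex.I)) -
      Complex.I • (∫ y : ℝ in (-T)..T, G (σ₁ + y * Complex.I)) = 0 := by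
    intro T
    have := Complex.integral_boundary_rect_eq_zero_of_differentiableOn G
      (σ₁ + (-T : ℝ) * Complex.I) (σ₂ + T * Complex.I) (hG.mono ?_)
    · simpa using this
    · intro z hz
      rw [Complex.mem_reProdIm] at hz
      have hz1 := hz.1
      simp at hz1
      rw [Set.mem_uIcc] at hz1
      have hp : 0 < z.re ∧ z.re < 1 := by
        rcases hz1 with h | h <;> constructor <;> linarith [h.1, h.2]
      refine ⟨?_, hp.2⟩
      rw [Complex.mem_slitPlane_iff]; exact Or.inl hp.1
  have hhor : ∀ ε : ℝ, |ε| = 1 →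
      Tendsto (fun T : ℝ => ∫ x : ℝ in σ₁..σ₂, G (x + (ε * T : ℝ) * Complex.I)) atTop (nhds 0) := by
    intro ε hε
    have hz : Tendsto (fun T : ℝ => C * Real.exp (-T) * |σ₂ - σ₁|) atTop (nhds 0) := by
      have := ((Real.tendsto_exp_neg_atTop_nhds_zero).const_mul C).mul_const |σ₂ - σ₁|
      simpa using this
    refine squeeze_zero_norm' ?_ hz
    filter_upwards [eventually_ge_atTop 1] with T hT
    apply intervalIntegral.norm_integral_le_of_norm_le_const
    intro x hx
    have hx1 := Set.uIoc_subset_uIcc hx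
    rw [Set.mem_uIcc] at hx1
    have hp : 0 < x ∧ x < 1 := by
      rcases hx1 with h | h <;> constructor <;> linarith [h.1, h.2]
    have e : |ε * T| = T := by rw [abs_mul, hε, one_mul, abs_of_pos (by linarith)]
    have := hb (x + (ε * T : ℝ) * Complex.I) (by simpa using hp.1) (by simpa using hp.2) (by
      simp only [Complex.add_im, Complex.ofReal_im, Complex.mul_im, Complex.ofReal_re, Complex.I_im, Complex.I_re, mul_one, mul_zero, add_zero, zero_add]
      rw [e]; exact hT)
    simp only [Complex.add_im, Complex.ofReal_im, Complex.mul_im, Complex.ofReal_re, Complex.I_im, Complex.I_re, mul_one, mul_zero, add_zero, zero_add] at this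
    rwa [e] at this
  have l1 := hhor (-1) (by simp)
  have l2 := hhor 1 (by simp)
  have l3 := intervalIntegral_tendsto_integral (hIntg σ₂ h2 h2') tendsto_neg_atTop_atBot tendsto_id
  have l4 := intervalIntegral_tendsto_integral (hIntg σ₁ h1 h1') tendsto_neg_atTop_atBot tendsto_id
  have l5 := ((l1.sub l2).add (l3.const_smul Complex.I)).sub (l4.const_smul Complex.I)
  have l6 : Tendsto (fun _ : ℝ => (0:ℂ)) atTop (nhds 0) := tendsto_const_nhds
  have := tendsto_nhds_unique (l5.congr fun T => by
    have := hrect T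
    simpa using this) l6
  simp only [sub_zero, zero_add, smul_eq_mul] at this
  have h0 : Complex.I * ((∫ t : ℝ, G (σ₂ + t * Complex.I)) - ∫ t : ℝ, G (σ₁ + t * Complex.I)) = 0 := by
    rw [mul_sub]; exact this
  have h3 := (mul_eq_zero.1 h0).resolve_left Complex.I_ne_zero
  exact (sub_eq_zero.1 h3).symm

lemma int_rpow_exp (s b : ℝ) (hs : -1 < s) (hb : 0 < b) :
    IntegrableOn (fun x : ℝ => x ^ s * Real.exp (-b * x)) (Ioi 0) := by
  have := integrableOn_rpow_mul_exp_neg_mul_rpow (p := 1) hs one_pos hb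
  simpa using this

lemma norm_lap (p : ℝ) (z : ℂ) (x : ℝ) (hx : 0 < x) :
    ‖((x ^ (p - 1) : ℝ) : ℂ) * Complex.exp (-z * x)‖ = x ^ (p - 1) * Real.exp (-z.re * x) := by
  rw [norm_mul, Complex.norm_real, Real.norm_of_nonneg (by positivity), Complex.norm_exp]
  simp

lemma meas_lap (p : ℝ) (z : ℂ) : AEStronglyMeasurable
    (fun x : ℝ => ((x ^ (p - 1) : ℝ) : ℂ) * Complex.exp (-z * x)) (volume.restrict (Ioi 0)) := by
  apply Measurable.aestronglyMeasurable
  fun_prop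

lemma int_lap (p : ℝ) (hp : 0 < p) (z : ℂ) (hz : 0 < z.re) :
    IntegrableOn (fun x : ℝ => ((x ^ (p - 1) : ℝ) : ℂ) * Complex.exp (-z * x)) (Ioi 0) := by
  refine Integrable.mono' (int_rpow_exp (p-1) z.re (by linarith) hz) (meas_lap p z) ?_
  filter_upwards [ae_restrict_mem measurableSet_Ioi] with x hx
  rw [norm_lap p z x hx]

lemma lap_diff (p : ℝ) (hp : 0 < p) : DifferentiableOn ℂ
    (fun z : ℂ => ∫ x in Ioi (0:ℝ), ((x ^ (p - 1) : ℝ) : ℂ) * Complex.exp (-z * x)) {z | 0 < z.re} := by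
  intro z hz
  have hz : 0 < z.re := hz
  have hpp : p + 1 - 1 = p := by ring
  have := hasDerivAt_integral_of_dominated_loc_of_deriv_le (𝕜 := ℂ) (μ := volume.restrict (Ioi (0:ℝ)))
    (F := fun (z : ℂ) (x : ℝ) => ((x ^ (p - 1) : ℝ) : ℂ) * Complex.exp (-z * x))
    (F' := fun (z : ℂ) (x : ℝ) => ((x ^ (p - 1) : ℝ) : ℂ) * (Complex.exp (-z * x) * (-x)))
    (x₀ := z) (s := {w : ℂ | z.re / 2 < w.re})
    (bound := fun x => x ^ p * Real.exp (-(z.re/2) * x))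
    ((isOpen_lt continuous_const Complex.continuous_re).mem_nhds (by simp; linarith))
    (Eventually.of_forall fun w => meas_lap p w) (int_lap p hp z hz)
    (by apply Measurable.aestronglyMeasurable; fun_prop)
    ?_ (int_rpow_exp p _ (by linarith) (by linarith)) ?_
  · exact this.2.differentiableAt.differentiableWithinAt
  · filter_upwards [ae_restrict_mem measurableSet_Ioi] with x hx w hw
    have hx : 0 < x := hx
    have hw : z.re / 2 < w.re := hw
    rw [← mul_assoc, norm_mul, norm_lap p w x hx, norm_neg, Complex.norm_real, Real.norm_of_nonneg hx.le]
    have e : x ^ p = x ^ (p-1) * x := by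
      rw [← Real.rpow_add_one hx.ne']; ring_nf
    rw [e]
    have : Real.exp (-w.re * x) ≤ Real.exp (-(z.re/2) * x) := by
      apply Real.exp_le_exp.2; nlinarith
    calc x ^ (p - 1) * Real.exp (-w.re * x) * x = x ^ (p-1) * x * Real.exp (-w.re * x) := by ring
      _ ≤ _ := by gcongr
  · refine Eventually.of_forall fun x w hw => ?_
    refine HasDerivAt.const_mul _ (HasDerivAt.cexp ?_)
    have := ((hasDerivAt_id w).neg).mul_const (x : ℂ)
    simpa using this

lemma lap_eq (p : ℝ) (hp : 0 < p) (z : ℂ) (hz : 0 < z.re) :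
    ∫ x in Ioi (0:ℝ), ((x ^ (p - 1) : ℝ) : ℂ) * Complex.exp (-z * x) = Real.Gamma p * z ^ (-(p:ℂ)) := by
  have hop : IsOpen {z : ℂ | 0 < z.re} := isOpen_lt continuous_const Complex.continuous_re
  have hR : DifferentiableOn ℂ (fun z : ℂ => (Real.Gamma p : ℂ) * z ^ (-(p:ℂ))) {z | 0 < z.re} := by
    intro w hw
    apply DifferentiableAt.differentiableWithinAt
    exact (differentiableAt_id.cpow_const (Or.inl hw)).const_mul _
  refine AnalyticOnNhd.eqOn_of_preconnected_of_frequently_eq (z₀ := 1) ((lap_diff p hp).analyticOnNhd hop)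
    (hR.analyticOnNhd hop) ?_ ?_ ?_ hz
  · exact (convex_halfSpace_re_gt 0).isPreconnected
  · simp
  · have key : ∀ r : ℝ, 0 < r → ∫ x in Ioi (0:ℝ), ((x ^ (p - 1) : ℝ) : ℂ) * Complex.exp (-(r:ℂ) * x) = Real.Gamma p * (r:ℂ) ^ (-(p:ℂ)) := by
      intro r hr
      have h := Complex.integral_cpow_mul_exp_neg_mul_Ioi (a := p) (r := r) (by simpa using hp) hr
      rw [Complex.Gamma_ofReal] at h
      rw [Complex.cpow_neg, mul_comm, ← Complex.ofReal_cpow hr.le]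
      rw [show ((1:ℂ)/r) = ((1/r : ℝ):ℂ) by push_cast; rfl, ← Complex.ofReal_cpow (by positivity), one_div, Real.inv_rpow hr.le] at h
      push_cast at h ⊢
      rw [← h]
      refine setIntegral_congr_fun measurableSet_Ioi fun x hx => ?_
      have hx : 0 < x := hx
      rw [Complex.ofReal_cpow hx.le]
      push_cast
      ring_nf
    have hu : Tendsto (fun n : ℕ => (((1 + 1/((n:ℝ)+1) : ℝ)) : ℂ)) atTop (nhdsWithin 1 {1}ᶜ) := by
      refine tendsto_nhdsWithin_iff.2 ⟨?_, ?_⟩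
      · have := (tendsto_const_nhds (x := (1:ℝ))).add (tendsto_one_div_add_atTop_nhds_zero_nat (𝕜 := ℝ))
        rw [add_zero] at this
        exact_mod_cast (Complex.continuous_ofReal.tendsto 1).comp this
      · refine Eventually.of_forall fun n => ?_
        have : (0:ℝ) < 1/((n:ℝ)+1) := by positivity
        simp only [Set.mem_compl_iff, Set.mem_singleton_iff]
        intro h
        have h' : (1 + 1/((n:ℝ)+1) : ℝ) = 1 := by exact_mod_cast h
        linarith
    refine hu.frequently (Frequently.of_forall fun n => key _ (by positivity))

lemma line_int (p σ : ℝ) (hp : 1 < p) (hσ : 0 < σ) :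
    Integrable (fun t : ℝ => ‖(σ : ℂ) + t * Complex.I‖ ^ (-p)) := by
  have h := integrable_rpow_neg_one_add_norm_sq (E := ℝ) (μ := volume) (r := p) (by simpa using hp)
  have h2 := (h.comp_div hσ.ne').const_mul (σ ^ (-p))
  refine h2.congr (Eventually.of_forall fun t => ?_)
  have e : ‖(σ : ℂ) + t * Complex.I‖ = σ * Real.sqrt (1 + ‖t/σ‖^2) := by
    rw [Complex.norm_add_mul_I, Real.norm_eq_abs, sq_abs]
    rw [show σ^2 + t^2 = σ^2 * (1 + (t/σ)^2) by field_simp, Real.sqrt_mul (by positivity), Real.sqrt_sq hσ.le]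
  simp only
  rw [e, Real.mul_rpow hσ.le (Real.sqrt_nonneg _), Real.sqrt_eq_rpow, ← Real.rpow_mul (by positivity)]
  ring_nf

lemma line_ne (σ : ℝ) (hσ : 0 < σ) (t : ℝ) : (σ : ℂ) + t * Complex.I ∈ Complex.slitPlane := by
  left; simpa using hσ

lemma line_int_c (p σ η : ℝ) (hp : 1 < p) (hσ : 0 < σ) :
    Integrable (fun t : ℝ => Complex.exp ((η:ℂ) * ((σ : ℂ) + t * Complex.I)) * ((σ : ℂ) + t * Complex.I) ^ (-(p:ℂ))) := by
  have h := (line_int p σ hp hσ).const_mul (Real.exp (η * σ))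
  refine h.mono' ?_ (Eventually.of_forall fun t => ?_)
  · apply Continuous.aestronglyMeasurable
    refine Continuous.mul (by fun_prop) ?_
    refine Continuous.cpow (by fun_prop) (by fun_prop) (fun t => line_ne σ hσ t)
  · rw [norm_mul, Complex.norm_exp, ← Complex.ofReal_neg, Complex.norm_cpow_real]
    simp

lemma lap_inv (p σ η : ℝ) (hp : 1 < p) (hσ : 0 < σ) (hη : 0 < η) :
    ∫ t : ℝ, Complex.exp ((η:ℂ) * ((σ : ℂ) + t * Complex.I)) * ((σ : ℂ) + t * Complex.I) ^ (-(p:ℂ))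
      = 2 * π * ((η ^ (p - 1) : ℝ) : ℂ) / Real.Gamma p := by
  have hG : Real.Gamma p ≠ 0 := (Real.Gamma_pos_of_pos (by linarith)).ne'
  have hGc : (Real.Gamma p : ℂ) ≠ 0 := by exact_mod_cast hG
  have hpi : (π : ℂ) ≠ 0 := by exact_mod_cast Real.pi_ne_zero
  set f : ℝ → ℂ := (Ioi (0:ℝ)).indicator (fun x : ℝ => ((x ^ (p - 1) : ℝ) : ℂ) * Complex.exp (-(σ:ℂ) * x)) with hf
  have hfi : Integrable f := by
    rw [hf, integrable_indicator_iff measurableSet_Ioi]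
    exact int_lap p (by linarith) σ (by simpa using hσ)
  have hF : FourierTransform.fourier f = fun w : ℝ => (Real.Gamma p : ℂ) * ((σ : ℂ) + ((2 * π * w : ℝ) : ℂ) * Complex.I) ^ (-(p:ℂ)) := by
    ext w
    rw [Real.fourier_real_eq_integral_exp_smul, ← lap_eq p (by linarith) _ (by simpa using hσ), ← integral_indicator measurableSet_Ioi]
    congr 1
    ext x
    rw [hf]
    by_cases hx : x ∈ Ioi (0:ℝ)
    · rw [indicator_of_mem hx, indicator_of_mem hx, smul_eq_mul, mul_left_comm, ← Complex.exp_add]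
      congr 2
      push_cast; ring
    · rw [indicator_of_notMem hx, indicator_of_notMem hx, smul_zero]
  have hFi : Integrable (FourierTransform.fourier f) := by
    rw [hF]
    refine Integrable.const_mul ?_ _
    have := (line_int_c p σ 0 hp hσ).comp_mul_left' (R := 2 * π) (by positivity)
    simpa using this
  have hcont : ContinuousAt f η := by
    have : f =ᶠ[nhds η] (fun x : ℝ => ((x ^ (p - 1) : ℝ) : ℂ) * Complex.exp (-(σ:ℂ) * x)) := by
      filter_upwards [Ioi_mem_nhds hη] with x hx
      rw [hf, indicator_of_mem hx]
    rw [continuousAt_congr this]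
    refine ContinuousAt.mul ?_ (by fun_prop)
    exact Complex.continuous_ofReal.continuousAt.comp (Real.continuousAt_rpow_const _ _ (Or.inl hη.ne'))
  have hinv := hfi.fourierInv_fourier_eq hFi hcont
  rw [hF, Real.fourierInv_eq'] at hinv
  rw [hf, indicator_of_mem (show η ∈ Ioi (0:ℝ) from hη)] at hinv
  have hsub := Measure.integral_comp_mul_left (fun t : ℝ => Complex.exp ((η:ℂ) * ((σ : ℂ) + t * Complex.I)) * ((σ : ℂ) + t * Complex.I) ^ (-(p:ℂ))) (2 * π)
  have hrel : ∫ w : ℝ, Complex.exp ((η:ℂ) * ((σ : ℂ) + ((2 * π * w : ℝ):ℂ) * Complex.I)) * ((σ : ℂ) + ((2 * π * w : ℝ):ℂ) * Complex.I) ^ (-(p:ℂ))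
      = Complex.exp (η * σ) / Real.Gamma p * (((η ^ (p - 1) : ℝ) : ℂ) * Complex.exp (-(σ:ℂ) * η)) := by
    rw [← hinv, ← integral_const_mul]
    congr 1
    ext w
    rw [mul_add, Complex.exp_add, smul_eq_mul]
    have : (η:ℂ) * (((2 * π * w : ℝ):ℂ) * Complex.I) = ((2 * π * inner ℝ w η : ℝ) : ℂ) * Complex.I := by
      simp; ring
    rw [this]
    field_simp
  rw [hrel, abs_of_pos (by positivity)] at hsub
  have hE : Complex.exp (η * σ) * Complex.exp (-(σ:ℂ) * η) = 1 := by
    rw [← Complex.exp_add]; simp [mul_comm]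
  generalize (∫ t : ℝ, Complex.exp ((η:ℂ) * ((σ : ℂ) + t * Complex.I)) * ((σ : ℂ) + t * Complex.I) ^ (-(p:ℂ))) = J at hsub ⊢
  have h3 : (((η ^ (p - 1) : ℝ) : ℂ)) / Real.Gamma p = (2 * (π:ℂ))⁻¹ * J := by
    rw [Complex.real_smul] at hsub
    push_cast at hsub ⊢
    rw [← hsub]
    linear_combination (-((η ^ (p - 1) : ℝ) : ℂ) / Real.Gamma p) * hE
  rw [mul_div_assoc, h3]
  field_simp

lemma iterDeriv_diff {U : Set ℂ} (hU : IsOpen U) {f : ℂ → ℂ} (hf : DifferentiableOn ℂ f U) (k : ℕ) :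
    DifferentiableOn ℂ (iteratedDeriv k f) U := by
  induction k with
  | zero => simpa using hf
  | succ k ih => rw [iteratedDeriv_succ]; exact ih.deriv hU

lemma line_Om (σ : ℝ) (hσ : 0 < σ) (hσ1 : σ < 1) (t : ℝ) : (σ : ℂ) + t * Complex.I ∈ Om :=
  ⟨line_ne σ hσ t, by simpa using hσ1⟩

lemma line_cont {f : ℂ → ℂ} (hf : DifferentiableOn ℂ f Om) (σ : ℝ) (hσ : 0 < σ) (hσ1 : σ < 1) :
    Continuous (fun t : ℝ => f ((σ : ℂ) + t * Complex.I)) := by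
  refine hf.continuousOn.comp_continuous (by fun_prop) (fun t => line_Om σ hσ hσ1 t)

lemma line_deriv_int (q β : ℝ) (hβ : 0 < β) (hq : 0 ≤ q) (hhalf : ∀ k : ℕ, q ≠ (k : ℝ) + 1 / 2)
    (k : ℕ) (σ η : ℝ) (hσ : 0 < σ) (hσ1 : σ ≤ 1/2) :
    Integrable (fun t : ℝ => Complex.exp ((η:ℂ) * ((σ : ℂ) + t * Complex.I)) *
      iteratedDeriv k (hfun q β) ((σ : ℂ) + t * Complex.I)) := by
  obtain ⟨C, hC, hb⟩ := h_far_deriv q β hβ hq hhalf 1 one_pos k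
  refine integrable_of_exp_bound _ ?_ (Real.exp (η * σ) * C) ?_
  · refine Continuous.mul (by fun_prop) (line_cont (iterDeriv_diff Om_open (hfun_diff q β (hb_q q hq hhalf)) k) σ hσ (by linarith))
  · intro t ht
    have := hb ((σ : ℂ) + t * Complex.I) (by simpa [abs_of_pos hσ] using hσ1) (by simpa using ht)
    rw [norm_mul, Complex.norm_exp, mul_assoc]
    simp only [Complex.add_im, Complex.ofReal_im, Complex.mul_im, Complex.ofReal_re, Complex.I_im, mul_one, Complex.I_re, mul_zero, add_zero, zero_add] at this
    simp only [Complex.re_ofReal_mul, Complex.add_re, Complex.ofReal_re, Complex.I_re, mul_zero, add_zero]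
    gcongr

lemma ibp_step (q β : ℝ) (hβ : 0 < β) (hq : 0 ≤ q) (hhalf : ∀ k : ℕ, q ≠ (k : ℝ) + 1 / 2)
    (k : ℕ) (σ η : ℝ) (hσ : 0 < σ) (hσ1 : σ ≤ 1/2) :
    (η : ℂ) * (∫ t : ℝ, Complex.exp ((η:ℂ) * ((σ : ℂ) + t * Complex.I)) *
      iteratedDeriv k (hfun q β) ((σ : ℂ) + t * Complex.I)) =
    - ∫ t : ℝ, Complex.exp ((η:ℂ) * ((σ : ℂ) + t * Complex.I)) *
      iteratedDeriv (k+1) (hfun q β) ((σ : ℂ) + t * Complex.I) := by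
  have i0 := line_deriv_int q β hβ hq hhalf k σ η hσ hσ1
  have i1 := line_deriv_int q β hβ hq hhalf (k+1) σ η hσ hσ1
  have hd : ∀ t : ℝ, HasDerivAt (fun t : ℝ => Complex.exp ((η:ℂ) * ((σ : ℂ) + t * Complex.I)) *
      iteratedDeriv k (hfun q β) ((σ : ℂ) + t * Complex.I))
      (Complex.I * η * (Complex.exp ((η:ℂ) * ((σ : ℂ) + t * Complex.I)) *
      iteratedDeriv k (hfun q β) ((σ : ℂ) + t * Complex.I)) + Complex.I * (Complex.exp ((η:ℂ) * ((σ : ℂ) + t * Complex.I)) *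
      iteratedDeriv (k+1) (hfun q β) ((σ : ℂ) + t * Complex.I))) t := by
    intro t
    have hl : HasDerivAt (fun t : ℝ => (σ : ℂ) + t * Complex.I) Complex.I t := by
      have := ((Complex.ofRealCLM.hasDerivAt (x := t)).mul_const Complex.I).const_add (σ : ℂ)
      simpa using this
    have hg : HasDerivAt (iteratedDeriv k (hfun q β)) (iteratedDeriv (k+1) (hfun q β) ((σ : ℂ) + t * Complex.I)) ((σ : ℂ) + t * Complex.I) := by
      rw [iteratedDeriv_succ]
      exact ((iterDeriv_diff Om_open (hfun_diff q β (hb_q q hq hhalf)) k).differentiableAt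
        (Om_open.mem_nhds (line_Om σ hσ (by linarith) t))).hasDerivAt
    have h1 := (hl.const_mul (η:ℂ)).cexp
    have h2 := hg.comp t hl
    convert! h1.mul h2 using 1
    simp only [Function.comp]
    ring
  have h := integral_eq_zero_of_hasDerivAt_of_integrable hd ((i0.const_mul _).add (i1.const_mul _)) i0
  rw [integral_add (i0.const_mul _) (i1.const_mul _), integral_const_mul, integral_const_mul] at h
  have hI := Complex.I_ne_zero
  apply mul_left_cancel₀ hI
  linear_combination h

lemma ibp (q β : ℝ) (hβ : 0 < β) (hq : 0 ≤ q) (hhalf : ∀ k : ℕ, q ≠ (k : ℝ) + 1 / 2)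
    (k : ℕ) (σ η : ℝ) (hσ : 0 < σ) (hσ1 : σ ≤ 1/2) :
    (η : ℂ) ^ k * (∫ t : ℝ, Complex.exp ((η:ℂ) * ((σ : ℂ) + t * Complex.I)) *
      hfun q β ((σ : ℂ) + t * Complex.I)) =
    (-1) ^ k * ∫ t : ℝ, Complex.exp ((η:ℂ) * ((σ : ℂ) + t * Complex.I)) *
      iteratedDeriv k (hfun q β) ((σ : ℂ) + t * Complex.I) := by
  induction k with
  | zero => simp
  | succ k ih =>
    rw [pow_succ', mul_assoc, ih, mul_left_comm, ibp_step q β hβ hq hhalf k σ η hσ hσ1]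
    ring

lemma iterDeriv_pow (w : ℂ) (k : ℕ) : ∀ s ∈ Complex.slitPlane,
    iteratedDeriv k (fun s : ℂ => s ^ w) s = (∏ i ∈ Finset.range k, (w - i)) * s ^ (w - k) := by
  induction k with
  | zero => intro s hs; simp
  | succ k ih =>
    intro s hs
    rw [iteratedDeriv_succ]
    have : iteratedDeriv k (fun s : ℂ => s ^ w) =ᶠ[nhds s] fun s => (∏ i ∈ Finset.range k, (w - i)) * s ^ (w - k) := by
      filter_upwards [Complex.isOpen_slitPlane.mem_nhds hs] with z hz using ih z hz
    have h := ((hasDerivAt_id s).cpow_const (c := w - k) hs).const_mul (∏ i ∈ Finset.range k, (w - i))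
    simp only [id] at h
    rw [this.deriv_eq, h.deriv, Finset.prod_range_succ]
    push_cast
    ring_nf

lemma gam_id (x : ℝ) (k : ℕ) (hx : ∀ m : ℕ, x ≠ -m) (hxk : 0 < x + k) :
    (-1 : ℂ) ^ k * (∏ i ∈ Finset.range k, (-(x:ℂ) - i)) / Real.Gamma (x + k) = 1 / Real.Gamma x := by
  have hG : (Real.Gamma x : ℂ) ≠ 0 := by exact_mod_cast Real.Gamma_ne_zero hx
  have hG2 : (Real.Gamma (x+k) : ℂ) ≠ 0 := by exact_mod_cast (Real.Gamma_pos_of_pos hxk).ne'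
  have h : (Real.Gamma (x + k) : ℂ) = (∏ i ∈ Finset.range k, ((x:ℂ) + i)) * Real.Gamma x := by
    clear hxk hG2
    induction k with
    | zero => simp
    | succ k ih =>
      have hne : x + k ≠ 0 := fun h => hx k (by linarith)
      have := Real.Gamma_add_one hne
      rw [Finset.prod_range_succ, mul_right_comm, ← ih]
      push_cast
      rw [← add_assoc, this]
      push_cast; ring
  have h2 : (-1 : ℂ) ^ k * (∏ i ∈ Finset.range k, (-(x:ℂ) - i)) = ∏ i ∈ Finset.range k, ((x:ℂ) + i) := by
    rw [← Finset.card_range k, ← Finset.prod_const, Finset.card_range, ← Finset.prod_mul_distrib]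
    refine Finset.prod_congr rfl fun i _ => by ring
  rw [h2, div_eq_div_iff hG2 hG, h, one_mul]

/-- remainder -/
noncomputable def rfun (q β : ℝ) (N : ℕ) (s : ℂ) : ℂ :=
  hfun q β s - ∑ n ∈ Finset.range N, acoef q β n * s ^ (((n : ℝ) - q - 5/2 : ℝ) : ℂ)

lemma rfun_diff (q β : ℝ) (N : ℕ) (hb : ∀ k : ℕ, (-(q:ℂ) - 1/2) + k ≠ 0) :
    DifferentiableOn ℂ (rfun q β N) Om := by
  refine (hfun_diff q β hb).sub (DifferentiableOn.fun_sum fun n _ => ?_)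
  intro s hs
  exact ((differentiableAt_id.cpow_const hs.1).const_mul _).differentiableWithinAt

lemma rfun_iter (q β : ℝ) (N k : ℕ) (hb : ∀ k : ℕ, (-(q:ℂ) - 1/2) + k ≠ 0) (s : ℂ) (hs : s ∈ Om) :
    iteratedDeriv k (rfun q β N) s = iteratedDeriv k (hfun q β) s -
      ∑ n ∈ Finset.range N, acoef q β n * ((∏ i ∈ Finset.range k, ((((n : ℝ) - q - 5/2 : ℝ) : ℂ) - i)) *
        s ^ (((n : ℝ) - q - 5/2 - k : ℝ) : ℂ)) := by
  have hA : ContDiffAt ℂ k (hfun q β) s := ((hfun_diff q β hb).analyticAt (Om_open.mem_nhds hs)).contDiffAt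
  have hP : ∀ n : ℕ, ContDiffAt ℂ k (fun s : ℂ => s ^ (((n : ℝ) - q - 5/2 : ℝ) : ℂ)) s := by
    intro n
    have : DifferentiableOn ℂ (fun s : ℂ => s ^ (((n : ℝ) - q - 5/2 : ℝ) : ℂ)) Om := fun z hz =>
      (differentiableAt_id.cpow_const hz.1).differentiableWithinAt
    exact (this.analyticAt (Om_open.mem_nhds hs)).contDiffAt
  have e : rfun q β N = hfun q β - (fun s => ∑ n ∈ Finset.range N, acoef q β n * s ^ (((n : ℝ) - q - 5/2 : ℝ) : ℂ)) := rfl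
  rw [e, iteratedDeriv_sub hA (ContDiffAt.sum fun n _ => contDiffAt_const.mul (hP n)), iteratedDeriv_fun_sum (fun n _ => contDiffAt_const.mul (hP n))]
  congr 1
  refine Finset.sum_congr rfl fun n _ => ?_
  rw [iteratedDeriv_const_mul _ (hP n), iterDeriv_pow _ _ s hs.1]
  push_cast
  rfl

lemma r_near (q β : ℝ) (hβ : 0 < β) (hb : ∀ k : ℕ, (-(q:ℂ) - 1/2) + k ≠ 0) (N : ℕ) :
    ∃ C δ : ℝ, 0 ≤ C ∧ 0 < δ ∧ δ ≤ 1 ∧ ∀ s : ℂ, s ≠ 0 → ‖s‖ < δ →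
      ‖rfun q β N s‖ ≤ C * ‖s‖ ^ ((N:ℝ) - q - 5/2) := by
  obtain ⟨C, hC, hO⟩ := (f2_taylor q β hβ hb N).exists_nonneg
  rw [IsBigOWith, eventually_nhdsWithin_iff, Metric.eventually_nhds_iff] at hO
  obtain ⟨δ, hδ, hO⟩ := hO
  refine ⟨C, min δ 1, hC, by positivity, min_le_right _ _, fun s hs hsδ => ?_⟩
  have h := hO (y := s) (by rw [dist_zero_right]; exact hsδ.trans_le (min_le_left _ _)) hs
  have hs0 : 0 < ‖s‖ := norm_pos_iff.2 hs
  have e : rfun q β N s = (f2 q β s - ∑ n ∈ Finset.range N, acoef q β n * s^n) / s ^ ((q:ℂ) + 5/2) := by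
    rw [rfun, hfun, sub_div, Finset.sum_div]
    congr 1
    refine Finset.sum_congr rfl fun n _ => ?_
    rw [mul_div_assoc]
    congr 1
    rw [show (((n : ℝ) - q - 5/2 : ℝ) : ℂ) = (n:ℂ) - ((q:ℂ) + 5/2) by push_cast; ring, Complex.cpow_sub _ _ hs, Complex.cpow_natCast]
  rw [e, norm_div, cpow_norm, sub_sub, Real.rpow_sub hs0, Real.rpow_natCast, ← mul_div_assoc]
  rw [norm_pow] at h
  gcongr

lemma r_deriv (q β : ℝ) (hβ : 0 < β) (hq : 0 ≤ q) (hhalf : ∀ k : ℕ, q ≠ (k : ℝ) + 1 / 2) (N k : ℕ) (hk : N ≤ k) :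
    ∃ C σ₀ : ℝ, 0 ≤ C ∧ 0 < σ₀ ∧ σ₀ ≤ 1/2 ∧ ∀ s : ℂ, 0 < s.re → s.re ≤ σ₀ →
      ‖iteratedDeriv k (rfun q β N) s‖ ≤ C * ‖s‖ ^ ((N:ℝ) - q - 5/2 - k) := by
  have hbq := hb_q q hq hhalf
  obtain ⟨C, δ, hC, hδ, hδ1, hnear⟩ := r_near q β hβ hbq N
  obtain ⟨C1, hC1, hfar⟩ := h_far_deriv q β hβ hq hhalf (δ/4) (by positivity) k
  set w : ℝ := (N:ℝ) - q - 5/2 with hw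
  have hkN : (N:ℝ) ≤ k := by exact_mod_cast hk
  have hm : 0 ≤ k - w := by rw [hw]; linarith
  set M : ℕ := ⌈k - w⌉₊ with hM
  set D : ℝ := (1/2)^w + (3/2)^w with hD
  have hD0 : 0 ≤ D := by positivity
  set E : ℕ → ℝ := fun n => ‖acoef q β n‖ * ‖∏ i ∈ Finset.range k, ((((n : ℝ) - q - 5/2 : ℝ) : ℂ) - i)‖ * (δ/2) ^ ((n:ℝ) - N) with hE
  have hE0 : 0 ≤ ∑ n ∈ Finset.range N, E n := Finset.sum_nonneg fun n _ => by positivity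
  refine ⟨k.factorial * (C * D) * 2 ^ k + (C1 * (M.factorial * Real.exp 1) + ∑ n ∈ Finset.range N, E n), δ/4,
    by positivity, by positivity, by linarith, fun s hre hre2 => ?_⟩
  have hs : s ≠ 0 := by rintro rfl; simp at hre
  have hs0 : 0 < ‖s‖ := norm_pos_iff.2 hs
  have hpw : 0 < ‖s‖ ^ (w - k) := by positivity
  rcases lt_or_ge ‖s‖ (δ/2) with hlt | hge
  · have hball : ∀ z ∈ Metric.closedBall s (‖s‖/2), z ∈ Om ∧ ‖s‖/2 ≤ ‖z‖ ∧ ‖z‖ ≤ 3/2 * ‖s‖ := by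
      intro z hz
      rw [mem_closedBall_iff_norm] at hz
      have h1 : ‖z‖ ≤ 3/2 * ‖s‖ := by
        have := norm_add_le (z - s) s
        rw [sub_add_cancel] at this; linarith
      have h2 : ‖s‖/2 ≤ ‖z‖ := by
        have := norm_sub_norm_le s z
        rw [norm_sub_rev] at this; linarith
      refine ⟨⟨?_, ?_⟩, h2, h1⟩
      · by_contra hns
        rw [Complex.mem_slitPlane_iff] at hns
        push Not at hns
        have h3 : ‖s‖^2 ≤ ‖z - s‖^2 := by
          rw [Complex.sq_norm, Complex.sq_norm, Complex.normSq_apply, Complex.normSq_apply, Complex.sub_re, Complex.sub_im, hns.2]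
          nlinarith [hns.1]
        have h4 : ‖s‖ ≤ ‖z - s‖ := (sq_le_sq₀ (norm_nonneg _) (norm_nonneg _)).1 h3
        linarith
      · have := Complex.re_le_norm z
        linarith
    have hd : DiffContOnCl ℂ (rfun q β N) (Metric.ball s (‖s‖/2)) := by
      apply DifferentiableOn.diffContOnCl
      refine (rfun_diff q β N hbq).mono ?_
      rw [closure_ball _ (by positivity)]
      exact fun z hz => (hball z hz).1
    have hcau := Complex.norm_iteratedDeriv_le_of_forall_mem_sphere_norm_le k (by positivity : 0 < ‖s‖/2) hd (C := C * (D * ‖s‖ ^ w)) ?_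
    · refine hcau.trans ?_
      have e : ‖s‖ ^ (w - k) = ‖s‖ ^ w / ‖s‖ ^ k := by rw [Real.rpow_sub hs0, Real.rpow_natCast]
      calc _ = k.factorial * (C * D) * 2 ^ k * ‖s‖ ^ (w - k) := by rw [e, div_pow]; field_simp
        _ ≤ _ := by
          apply mul_le_mul_of_nonneg_right _ hpw.le
          have : 0 ≤ C1 * (M.factorial * Real.exp 1) := by positivity
          linarith
    · intro z hz
      obtain ⟨h1, h2, h3⟩ := hball z (Metric.sphere_subset_closedBall hz)
      have hz0 : 0 < ‖z‖ := by linarith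
      refine (hnear z (norm_pos_iff.1 hz0) (by linarith)).trans ?_
      apply mul_le_mul_of_nonneg_left _ hC
      rw [hD, add_mul, ← Real.mul_rpow (by norm_num) hs0.le, ← Real.mul_rpow (by norm_num) hs0.le]
      rcases le_total 0 w with hw0 | hw0
      · have := Real.rpow_le_rpow hz0.le h3 hw0
        have : 0 ≤ (1/2 * ‖s‖) ^ w := by positivity
        linarith
      · have := Real.rpow_le_rpow_of_nonpos (by linarith : 0 < 1/2 * ‖s‖) (by linarith : 1/2 * ‖s‖ ≤ ‖z‖) hw0
        have : 0 ≤ (3/2 * ‖s‖) ^ w := by positivity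
        linarith
  · have him : δ/4 ≤ |s.im| := by
      have := Complex.norm_le_abs_re_add_abs_im s
      rw [abs_of_pos hre] at this
      linarith
    have hOm : s ∈ Om := ⟨Or.inl hre, by linarith⟩
    rw [rfun_iter q β N k hbq s hOm]
    have hA : ‖iteratedDeriv k (hfun q β) s‖ ≤ C1 * (M.factorial * Real.exp 1) * ‖s‖ ^ (w - k) := by
      refine (hfar s (by rw [abs_of_pos hre]; linarith) him).trans ?_
      rw [mul_assoc]
      apply mul_le_mul_of_nonneg_left _ hC1
      set t := |s.im|
      have hn : ‖s‖ ≤ 1 + t := by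
        have := Complex.norm_le_abs_re_add_abs_im s
        rw [abs_of_pos hre] at this
        linarith
      have h1 : ‖s‖ ^ ((k:ℝ) - w) ≤ M.factorial * (Real.exp 1 * Real.exp t) := by
        calc ‖s‖ ^ ((k:ℝ) - w) ≤ (1 + t) ^ ((k:ℝ) - w) := Real.rpow_le_rpow hs0.le hn hm
          _ ≤ (1 + t) ^ (M : ℝ) := Real.rpow_le_rpow_of_exponent_le (by have := abs_nonneg s.im; linarith) (Nat.le_ceil _)
          _ = (1 + t) ^ M := Real.rpow_natCast _ _
          _ ≤ _ := by
            have := Real.pow_div_factorial_le_exp (1 + t) (by linarith) M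
            rw [div_le_iff₀ (by positivity), Real.exp_add] at this
            linarith
      have e : ‖s‖ ^ (w - k) = (‖s‖ ^ ((k:ℝ) - w))⁻¹ := by rw [← Real.rpow_neg hs0.le]; ring_nf
      rw [e, Real.exp_neg, ← div_eq_mul_inv, le_div_iff₀ (by positivity), inv_mul_le_iff₀ (by positivity)]
      linarith
    have hB : ‖∑ n ∈ Finset.range N, acoef q β n * ((∏ i ∈ Finset.range k, ((((n : ℝ) - q - 5/2 : ℝ) : ℂ) - i)) *
        s ^ (((n : ℝ) - q - 5/2 - k : ℝ) : ℂ))‖ ≤ (∑ n ∈ Finset.range N, E n) * ‖s‖ ^ (w - k) := by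
      rw [Finset.sum_mul]
      refine norm_sum_le_of_le _ fun n hn => ?_
      have hnN : (n:ℝ) ≤ N := by exact_mod_cast (Finset.mem_range.1 hn).le
      rw [norm_mul, norm_mul, Complex.norm_cpow_real]
      have e : ‖s‖ ^ ((n : ℝ) - q - 5/2 - k) = ‖s‖ ^ ((n:ℝ) - N) * ‖s‖ ^ (w - k) := by
        rw [← Real.rpow_add hs0]; congr 1; rw [hw]; ring
      have h2 : ‖s‖ ^ ((n:ℝ) - N) ≤ (δ/2) ^ ((n:ℝ) - N) :=
        Real.rpow_le_rpow_of_nonpos (by positivity) hge (by linarith)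
      rw [e, hE, ← mul_assoc, ← mul_assoc]
      beta_reduce
      gcongr
    refine (norm_sub_le _ _).trans ((add_le_add hA hB).trans ?_)
    rw [← add_mul]
    apply mul_le_mul_of_nonneg_right _ hpw.le
    have : 0 ≤ k.factorial * (C * D) * 2 ^ k := by positivity
    linarith

lemma line_scale (m η : ℝ) (hη : 0 < η) :
    ∫ t : ℝ, ‖((1/η : ℝ) : ℂ) + t * Complex.I‖ ^ (-m) = η ^ (m - 1) * ∫ t : ℝ, ‖((1 : ℝ) : ℂ) + t * Complex.I‖ ^ (-m) := by
  have h := Measure.integral_comp_mul_left (fun t : ℝ => ‖((1 : ℝ) : ℂ) + t * Complex.I‖ ^ (-m)) η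
  have e : ∀ t : ℝ, ‖((1/η : ℝ) : ℂ) + t * Complex.I‖ ^ (-m) = η ^ m * ‖((1 : ℝ) : ℂ) + ((η * t : ℝ) : ℂ) * Complex.I‖ ^ (-m) := by
    intro t
    have : ((1/η : ℝ) : ℂ) + t * Complex.I = ((1/η : ℝ) : ℂ) * (((1 : ℝ) : ℂ) + ((η * t : ℝ) : ℂ) * Complex.I) := by
      have : (η:ℂ) ≠ 0 := by exact_mod_cast hη.ne'
      push_cast; field_simp
    rw [this, norm_mul, Complex.norm_real, Real.norm_of_nonneg (by positivity), Real.mul_rpow (by positivity) (norm_nonneg _), one_div, Real.inv_rpow hη.le, Real.rpow_neg hη.le, inv_inv]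
  simp_rw [e]
  rw [integral_const_mul, h, abs_of_pos (by positivity), smul_eq_mul, ← mul_assoc, Real.rpow_sub hη, Real.rpow_one, div_eq_mul_inv]

lemma F2_shift (q β c : ℝ) (hβ : 0 < β) (hq : 0 ≤ q) (hhalf : ∀ k : ℕ, q ≠ (k : ℝ) + 1 / 2)
    (hc0 : 0 < c) (hc1 : c < 1) (η σ : ℝ) (hη : 0 < η) (hσ : 0 < σ) (hσ1 : σ < 1) :
    F2 q β c η = (1 / (2 * (π : ℂ))) * ∫ t : ℝ, Complex.exp ((η:ℂ) * ((σ : ℂ) + t * Complex.I)) *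
      hfun q β ((σ : ℂ) + t * Complex.I) := by
  rw [F2]
  congr 1
  obtain ⟨C, hC, hb⟩ := h_far q β hβ hq hhalf 1 one_pos
  rw [← shift_line (fun s => Complex.exp ((η:ℂ) * s) * hfun q β s) ?_ (Real.exp η * C) c σ hc0 hc1 hσ hσ1 ?_]
  · simp only [hfun, mul_div_assoc]
  · exact DifferentiableOn.mul (by fun_prop) (hfun_diff q β (hb_q q hq hhalf))
  · intro s h1 h2 h3
    rw [norm_mul, Complex.norm_exp, Complex.re_ofReal_mul, mul_assoc]
    have := hb s (by rw [abs_of_pos h1]; exact h2.le) h3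
    have h4 : η * s.re ≤ η := by nlinarith
    gcongr

lemma main_asym (q β c : ℝ) (hβ : 0 < β) (hq : 0 ≤ q) (hhalf : ∀ k : ℕ, q ≠ (k : ℝ) + 1 / 2)
    (hc0 : 0 < c) (hc1 : c < 1) (N : ℕ) :
    (fun η : ℝ => F2 q β c η -
          ((η ^ (q + 3 / 2) : ℝ) : ℂ) * ∑ n ∈ Finset.range N,
            acoef q β n / ((Real.Gamma (q + 5 / 2 - n) : ℂ) * (η : ℂ) ^ n)) =O[atTop]
        (fun η : ℝ => η ^ (q + 3 / 2 - N)) := by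
  have hbq := hb_q q hq hhalf
  obtain ⟨C, σ₀, hC, hσ₀, hσ₀', hr⟩ := r_deriv q β hβ hq hhalf N N le_rfl
  set A : ℝ := ∫ t : ℝ, ‖((1 : ℝ) : ℂ) + t * Complex.I‖ ^ (-(q + 5/2)) with hA
  refine IsBigO.of_bound (1 / (2 * π) * (Real.exp 1 * C * A)) ?_
  filter_upwards [eventually_ge_atTop (1/σ₀), eventually_gt_atTop 0] with η hη1 hη
  set σ : ℝ := 1/η with hσd
  have hσ : 0 < σ := by positivity
  have hσσ : σ ≤ σ₀ := by rw [hσd]; rw [div_le_comm₀ hη hσ₀]; exact hη1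
  have hησ : η * σ = 1 := by rw [hσd]; field_simp
  have hηc : (η:ℂ) ≠ 0 := by exact_mod_cast hη.ne'
  have hpi : (π:ℂ) ≠ 0 := by exact_mod_cast Real.pi_ne_zero
  rw [F2_shift q β c hβ hq hhalf hc0 hc1 η σ hη hσ (by linarith)]
  have hibp := ibp q β hβ hq hhalf N σ η hσ (by linarith)
  set I0 := ∫ t : ℝ, Complex.exp ((η:ℂ) * ((σ : ℂ) + t * Complex.I)) * hfun q β ((σ : ℂ) + t * Complex.I) with hI0
  set P : ℕ → ℂ := fun n => ∏ i ∈ Finset.range N, ((((n : ℝ) - q - 5/2 : ℝ) : ℂ) - i) with hP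
  have hp : ∀ n ∈ Finset.range N, 1 < q + 5/2 + N - n := by
    intro n hn
    have : (n:ℝ) ≤ N := by exact_mod_cast (Finset.mem_range.1 hn).le
    linarith
  have hIntg : ∀ n ∈ Finset.range N, Integrable (fun t : ℝ => acoef q β n * P n * (Complex.exp ((η:ℂ) * ((σ : ℂ) + t * Complex.I)) * ((σ : ℂ) + t * Complex.I) ^ (-((q + 5/2 + N - n : ℝ):ℂ)))) :=
    fun n hn => (line_int_c _ σ η (hp n hn) hσ).const_mul _
  have hi1 := line_deriv_int q β hβ hq hhalf N σ η hσ (by linarith)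
  have hsplit : ∀ t : ℝ, Complex.exp ((η:ℂ) * ((σ : ℂ) + t * Complex.I)) * iteratedDeriv N (rfun q β N) ((σ : ℂ) + t * Complex.I)
      = Complex.exp ((η:ℂ) * ((σ : ℂ) + t * Complex.I)) * iteratedDeriv N (hfun q β) ((σ : ℂ) + t * Complex.I) -
        ∑ n ∈ Finset.range N, acoef q β n * P n * (Complex.exp ((η:ℂ) * ((σ : ℂ) + t * Complex.I)) * ((σ : ℂ) + t * Complex.I) ^ (-((q + 5/2 + N - n : ℝ):ℂ))) := by
    intro t
    rw [rfun_iter q β N N hbq _ (line_Om σ hσ (by linarith) t), mul_sub, Finset.mul_sum]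
    congr 1
    refine Finset.sum_congr rfl fun n _ => ?_
    rw [show (((n : ℝ) - q - 5/2 - N : ℝ) : ℂ) = -((q + 5/2 + N - n : ℝ):ℂ) by push_cast; ring]
    ring
  have hR := integral_sub hi1 (integrable_finsetSum _ hIntg)
  simp_rw [← hsplit] at hR
  rw [integral_finsetSum _ hIntg] at hR
  have hsum : ∑ n ∈ Finset.range N, ∫ t : ℝ, acoef q β n * P n * (Complex.exp ((η:ℂ) * ((σ : ℂ) + t * Complex.I)) * ((σ : ℂ) + t * Complex.I) ^ (-((q + 5/2 + N - n : ℝ):ℂ)))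
      = (-1)^N * (2 * π) * (η:ℂ)^N * (((η ^ (q + 3 / 2) : ℝ) : ℂ) * ∑ n ∈ Finset.range N,
            acoef q β n / ((Real.Gamma (q + 5 / 2 - n) : ℂ) * (η : ℂ) ^ n)) := by
    rw [Finset.mul_sum, Finset.mul_sum]
    refine Finset.sum_congr rfl fun n hn => ?_
    rw [integral_const_mul, lap_inv _ σ η (hp n hn) hσ hη]
    have hx : ∀ m : ℕ, q + 5/2 - n ≠ -m := by
      intro m h
      have h1 : q = ((n:ℝ) - m - 3) + 1/2 := by linarith
      have h2 : m + 3 ≤ n := by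
        by_contra hlt
        have : (n:ℝ) + 1 ≤ m + 3 := by exact_mod_cast (by omega : n + 1 ≤ m + 3)
        linarith
      refine hhalf (n - (m+3)) ?_
      rw [Nat.cast_sub h2]; push_cast; linarith
    have hg := gam_id (q + 5/2 - n) N hx (by have := hp n hn; linarith)
    have e1 : (∏ i ∈ Finset.range N, (-((q + 5/2 - n : ℝ):ℂ) - i)) = P n := by
      rw [hP]
      refine Finset.prod_congr rfl fun i _ => by push_cast; ring
    rw [e1, show q + 5/2 - n + N = q + 5/2 + N - n by ring] at hg
    have e2 : ((η ^ (q + 5/2 + N - n - 1) : ℝ) : ℂ) = ((η ^ (q + 3/2) : ℝ) : ℂ) * (η:ℂ)^N / (η:ℂ)^n := by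
      rw [show q + 5/2 + N - n - 1 = q + 3/2 + N - n by ring, Real.rpow_sub hη, Real.rpow_add hη, Real.rpow_natCast, Real.rpow_natCast]
      push_cast; rfl
    rw [e2]
    have h1N : (-1:ℂ)^N * (-1)^N = 1 := by rw [← mul_pow]; simp
    have hg' : P n / Real.Gamma (q + 5/2 + N - n) = (-1)^N * (1 / Real.Gamma (q + 5/2 - n)) := by
      rw [← hg, ← mul_div_assoc, ← mul_assoc, h1N, one_mul]
    calc _ = acoef q β n * (P n / Real.Gamma (q + 5/2 + N - n)) * (2 * π * (((η ^ (q + 3/2) : ℝ) : ℂ) * (η:ℂ)^N / (η:ℂ)^n)) := by ring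
      _ = _ := by rw [hg', div_mul_eq_div_div]; ring
  rw [hsum] at hR
  set T := ((η ^ (q + 3 / 2) : ℝ) : ℂ) * ∑ n ∈ Finset.range N,
            acoef q β n / ((Real.Gamma (q + 5 / 2 - n) : ℂ) * (η : ℂ) ^ n) with hT
  set R := ∫ t : ℝ, Complex.exp ((η:ℂ) * ((σ : ℂ) + t * Complex.I)) * iteratedDeriv N (rfun q β N) ((σ : ℂ) + t * Complex.I) with hRd
  have hRn : ‖R‖ ≤ Real.exp 1 * C * (η ^ (q + 3/2) * A) := by
    have hl := line_scale (q + 5/2) η hη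
    rw [show q + 5/2 - 1 = q + 3/2 by ring, ← hA] at hl
    rw [← hl, ← integral_const_mul]
    refine norm_integral_le_of_norm_le ((line_int _ σ (by linarith) hσ).const_mul _) (Eventually.of_forall fun t => ?_)
    rw [norm_mul, Complex.norm_exp, Complex.re_ofReal_mul, mul_assoc]
    have h := hr ((σ:ℂ) + t * Complex.I) (by simpa using hσ) (by simpa using hσσ)
    rw [show (N:ℝ) - q - 5/2 - N = -(q + 5/2) by ring] at h
    have h2 : η * ((σ:ℂ) + t * Complex.I).re = 1 := by simpa using hησ
    rw [h2]
    gcongr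
  have h1N : (-1:ℂ)^N * (-1)^N = 1 := by rw [← mul_pow]; simp
  have hfin : 1 / (2 * (π:ℂ)) * I0 - T = 1 / (2 * (π:ℂ)) * ((-1)^N * R / (η:ℂ)^N) := by
    have hηN : (η:ℂ)^N ≠ 0 := pow_ne_zero _ hηc
    have h5 : (η:ℂ)^N * I0 = (-1)^N * R + (2 * π) * (η:ℂ)^N * T := by
      rw [hibp, hR]
      linear_combination (2 * π * (η:ℂ)^N * T) * h1N
    have h6 : I0 = (-1)^N * R / (η:ℂ)^N + (2 * π) * T := by
      field_simp
      linear_combination h5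
    rw [h6]
    field_simp
    ring
  have e3 : ‖(1 / (2 * (π:ℂ)))‖ = 1 / (2 * π) := by
    rw [norm_div, norm_mul, Complex.norm_real, Real.norm_of_nonneg Real.pi_pos.le]; simp
  rw [hfin, norm_mul, e3, norm_div, norm_mul, norm_pow, norm_neg, norm_one, one_pow, one_mul, norm_pow, Complex.norm_real]
  rw [Real.norm_of_nonneg hη.le, Real.norm_of_nonneg (by positivity), Real.rpow_sub hη, Real.rpow_natCast, mul_assoc (1 / (2*π))]
  have := Real.pi_pos
  apply mul_le_mul_of_nonneg_left _ (by positivity)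
  rw [← mul_div_assoc]
  gcongr
  linarith

lemma kum_neg (q β : ℝ) (hβ : 0 < β) (hq : 0 ≤ q) (hhalf : ∀ k : ℕ, q ≠ (k : ℝ) + 1 / 2) :
    ∃ (C : ℝ) (K : ℕ), 0 ≤ C ∧ ∀ (η : ℝ) (m : ℕ), ‖Sterm q β η m‖ ≤ C * ((m:ℝ)+1)^K * Real.exp (-((m:ℝ)+1) * η) := by
  obtain ⟨C, K, hC, hM⟩ := kummer_bound q hq hhalf
  refine ⟨C * (1 + 2/β)^K, K, by positivity, fun η m => ?_⟩
  have h := hM (-2 * ((m : ℂ) + 1) / (β : ℂ))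
  have e : (-2 * ((m : ℂ) + 1) / (β : ℂ)) = ((-(2/β * ((m:ℝ)+1)) : ℝ) : ℂ) := by push_cast; ring
  have hb2 : 0 < 2/β := by positivity
  have hm : (0:ℝ) ≤ m := m.cast_nonneg
  have h1 : ‖kummerM (-1 / 2) (-(q : ℂ) - 1 / 2) (-2 * ((m : ℂ) + 1) / (β : ℂ))‖ ≤ C * ((1 + 2/β)^K * ((m:ℝ)+1)^K) := by
    refine h.trans ?_
    rw [e, Complex.ofReal_re, Complex.norm_real, norm_neg, Real.norm_of_nonneg (by positivity), max_eq_left (by rw [Real.exp_le_one_iff, neg_nonpos]; positivity), mul_one, ← mul_pow]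
    gcongr
    nlinarith
  rw [Sterm, norm_mul, norm_mul, norm_pow, norm_neg, norm_one, one_pow, one_mul, Complex.norm_real, Real.norm_of_nonneg (by positivity)]
  have h2 : Real.exp (-((m : ℝ) + 1) * η) / ((m : ℝ) + 1) ^ (q + 1) ≤ Real.exp (-((m : ℝ) + 1) * η) :=
    div_le_self (Real.exp_nonneg _) (Real.one_le_rpow (by linarith) (by linarith))
  calc _ ≤ Real.exp (-((m : ℝ) + 1) * η) * (C * ((1 + 2/β)^K * ((m:ℝ)+1)^K)) := by gcongr
    _ = _ := by ring

lemma geo_sum (K : ℕ) (η : ℝ) (hη : 0 < η) : Summable (fun m : ℕ => ((m:ℝ)+1)^K * Real.exp (-((m:ℝ)+1) * η)) := by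
  have h := Real.summable_pow_mul_exp_neg_nat_mul K hη
  have h2 := (summable_nat_add_iff 1).2 h
  refine h2.congr fun m => ?_
  push_cast
  ring_nf

lemma S_summable (q β : ℝ) (hβ : 0 < β) (hq : 0 ≤ q) (hhalf : ∀ k : ℕ, q ≠ (k : ℝ) + 1 / 2) (η : ℝ) (hη : 0 < η) :
    Summable (fun m : ℕ => Sterm q β η m) := by
  obtain ⟨C, K, hC, h⟩ := kum_neg q β hβ hq hhalf
  refine Summable.of_norm_bounded ((geo_sum K η hη).mul_left C) fun m => ?_
  rw [← mul_assoc]; exact h η m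

lemma S_small (q β : ℝ) (hβ : 0 < β) (hq : 0 ≤ q) (hhalf : ∀ k : ℕ, q ≠ (k : ℝ) + 1 / 2) (a : ℝ) :
    (fun η : ℝ => Sfun q β η) =O[atTop] (fun η : ℝ => η ^ a) := by
  obtain ⟨C, K, hC, h⟩ := kum_neg q β hβ hq hhalf
  have hs := (geo_sum K 1 one_pos).mul_left C
  set B := ∑' m : ℕ, C * (((m:ℝ)+1)^K * Real.exp (-((m:ℝ)+1) * 1)) with hB
  have h1 : (fun η : ℝ => Sfun q β η) =O[atTop] (fun η : ℝ => Real.exp (-1 * η)) := by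
    refine IsBigO.of_bound (|Real.sin (π * q)| * (B * Real.exp 1)) ?_
    filter_upwards [eventually_ge_atTop 1] with η hη
    rw [Sfun, norm_mul, Complex.norm_real, Real.norm_eq_abs, mul_assoc, Real.norm_of_nonneg (Real.exp_nonneg _)]
    apply mul_le_mul_of_nonneg_left _ (abs_nonneg _)
    rw [mul_assoc, ← Real.exp_add]
    refine tsum_of_norm_bounded (hs.hasSum.mul_right _) fun m => ?_
    refine (h η m).trans ?_
    rw [mul_assoc, mul_assoc, mul_assoc, ← Real.exp_add]
    have hm : (0:ℝ) ≤ m := m.cast_nonneg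
    have : -((m:ℝ)+1) * η ≤ -((m:ℝ)+1) * 1 + (1 + -1 * η) := by nlinarith
    gcongr
  exact h1.trans (isLittleO_exp_neg_mul_rpow_atTop one_pos a).isBigO

theorem stmt7 (q β c : ℝ) (hq : 0 ≤ q) (hhalf : ∀ k : ℕ, q ≠ (k : ℝ) + 1 / 2)
    (hβ : 0 < β) (hc0 : 0 < c) (hc1 : c < 1) :
    (∀ η : ℝ, 0 < η → Summable (fun m : ℕ => Sterm q β η m)) ∧
    ∀ N : ℕ, 1 ≤ N →
      (fun η : ℝ => F2 q β c η - Sfun q β η -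
          ((η ^ (q + 3 / 2) : ℝ) : ℂ) * ∑ n ∈ Finset.range N,
            acoef q β n / ((Real.Gamma (q + 5 / 2 - n) : ℂ) * (η : ℂ) ^ n)) =O[atTop]
        (fun η : ℝ => η ^ (q + 3 / 2 - N)) := by
  refine ⟨fun η hη => S_summable q β hβ hq hhalf η hη, fun N _ => ?_⟩
  refine ((main_asym q β c hβ hq hhalf hc0 hc1 N).sub (S_small q β hβ hq hhalf _)).congr_left fun η => ?_
  ring
end

section
/- Let m ≥ 2 be an integer, β > 0 and η ∈ ℝ. With R_{m,k} = (2/β)^{−k} (k−1)! (3/2 − m + k)_{m−k} / (Γ(m−1/2) (m−k)!) for 1 ≤ k ≤ m, one has Γ(m−1/2) (2/β)^{m−1/2} Σ_{k=1}^m (R_{m,k}/Γ(k)) F_{k−1}(η) = Σ_{j=0}^{m−1} (−1)^j ((−1/2)_j / j!) (2/β)^{j−1/2} F_{m−j−1}(η). -/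
theorem poch_aux (j : ℕ) : (ascPochhammer ℝ j).eval (3 / 2 - (j : ℝ)) =
    (-1 : ℝ) ^ j * (ascPochhammer ℝ j).eval (-1 / 2 : ℝ) := by
  have h1 := ascPochhammer_eval_neg_eq_descPochhammer ℝ (1 / 2 : ℝ) j
  have h2 := descPochhammer_eval_eq_ascPochhammer ℝ (1 / 2 : ℝ) j
  have e1 : (-1 / 2 : ℝ) = -(1 / 2) := by norm_num
  have e2 : (3 / 2 - (j : ℝ)) = 1 / 2 - j + 1 := by ring
  rw [e1, h1, e2, ← h2, ← mul_assoc, ← mul_pow]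
  norm_num


open Real MeasureTheory Set Finset

/-- The coefficients `R_{m,k}`. -/
noncomputable def Rcoef (m k : ℕ) (β : ℝ) : ℝ :=
  (2 / β) ^ (-(k : ℝ)) * (k - 1).factorial *
    (ascPochhammer ℝ (m - k)).eval (3 / 2 - (m : ℝ) + k) /
      (Real.Gamma ((m : ℝ) - 1 / 2) * (m - k).factorial)

theorem stmt8 (m : ℕ) (hm : 2 ≤ m) (β η : ℝ) (hβ : 0 < β) :
    Real.Gamma ((m : ℝ) - 1 / 2) * (2 / β) ^ ((m : ℝ) - 1 / 2) *
        ∑ k ∈ Finset.Icc 1 m, Rcoef m k β / Real.Gamma (k : ℝ) * Fstd ((k : ℝ) - 1) η =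
      ∑ j ∈ Finset.range m, (-1 : ℝ) ^ j * ((ascPochhammer ℝ j).eval (-1 / 2 : ℝ) / j.factorial) *
        (2 / β) ^ ((j : ℝ) - 1 / 2) * Fstd ((m : ℝ) - j - 1) η := by
  have hb : 0 < 2 / β := by positivity
  have hm' : (2 : ℝ) ≤ m := by exact_mod_cast hm
  have hG : Real.Gamma ((m : ℝ) - 1 / 2) ≠ 0 := (Real.Gamma_pos_of_pos (by linarith)).ne'
  rw [Finset.mul_sum]
  refine Finset.sum_nbij' (fun k => m - k) (fun j => m - j) ?_ ?_ ?_ ?_ ?_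
  · intro k hk
    simp only [Finset.mem_Icc, Finset.mem_range] at *
    omega
  · intro k hk
    simp only [Finset.mem_Icc, Finset.mem_range] at *
    omega
  · intro k hk
    simp only [Finset.mem_Icc] at *
    omega
  · intro k hk
    simp only [Finset.mem_range] at *
    omega
  · intro k hk
    simp only [Finset.mem_Icc] at hk
    obtain ⟨h1, h2⟩ := hk
    obtain ⟨n, rfl⟩ : ∃ n, k = n + 1 := ⟨k - 1, by omega⟩
    obtain ⟨j, rfl⟩ : ∃ j, m = n + 1 + j := ⟨m - (n + 1), by omega⟩
    have e : n + 1 + j - (n + 1) = j := by omega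
    have hp := poch_aux j
    have e3 : (3 / 2 - ((n + 1 + j : ℕ) : ℝ) + ((n + 1 : ℕ) : ℝ)) = 3 / 2 - (j : ℝ) := by
      push_cast; ring
    have e4 : (((n + 1 + j : ℕ) : ℝ) - (j : ℝ) - 1) = ((n + 1 : ℕ) : ℝ) - 1 := by
      push_cast; ring
    have e5 : (2 / β) ^ ((j : ℝ) - 1 / 2) =
        (2 / β) ^ (((n + 1 + j : ℕ) : ℝ) - 1 / 2) * (2 / β) ^ (-((n + 1 : ℕ) : ℝ)) := by
      rw [← Real.rpow_add hb]
      congr 1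
      push_cast; ring
    have e6 : Real.Gamma ((n + 1 : ℕ) : ℝ) = n.factorial := by
      rw [← Real.Gamma_nat_eq_factorial]; push_cast; rfl
    have hn : (n.factorial : ℝ) ≠ 0 := by positivity
    have hj : (j.factorial : ℝ) ≠ 0 := by positivity
    simp only [Rcoef, e]
    rw [e3, e4, e5, e6, hp, Nat.add_sub_cancel]
    generalize (2 / β) ^ (((n + 1 + j : ℕ) : ℝ) - 1 / 2) = A
    generalize (2 / β) ^ (-((n + 1 : ℕ) : ℝ)) = B
    generalize Real.Gamma (((n + 1 + j : ℕ) : ℝ) - 1 / 2) = G at *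
    generalize Fstd _ η = F
    generalize (ascPochhammer ℝ j).eval (-1 / 2 : ℝ) = P
    field_simp
end
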